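/- arXiv:2207.09552 — 2 statements merged into one kernel-verified Lean document; each statement's English description precedes it below -/
import Mathlib

section
/- For every convex body K in ℝ², the smallest possible density of a non-separable lattice of translates of K satisfies d_{2,1}(K) ≤ π√3/8. -/
open MeasureTheory Set Matrix Pointwise

noncomputable section

/-- The lattice `A · ℤⁿ` associated with an (invertible) matrix `A`. -/
def latticeOf {n : ℕ} (A : Matrix (Fin n) (Fin n) ℝ) : Set (Fin n → ℝ) :=
  Set.range fun m : Fin n → ℤ => A.mulVec fun i => (m i : ℝ)

/-- `Λ + K` is non-separable: every affine hyperplane `{y | ⟨u,y⟩ = c}` (with `u ≠ 0`)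
meets `x + K` for some `x ∈ Λ`. -/
def NonSeparable {n : ℕ} (Λ K : Set (Fin n → ℝ)) : Prop :=
  ∀ u : Fin n → ℝ, u ≠ 0 → ∀ c : ℝ, ∃ x ∈ Λ, ∃ y ∈ K, u ⬝ᵥ (x + y) = c

/-- `d_{n,n-1}(K)`: the smallest density `|K|/d(Λ)` of a non-separable
lattice of translates of `K`. -/
def dTrans {n : ℕ} (K : Set (Fin n → ℝ)) : ℝ :=
  sInf {d : ℝ | ∃ A : Matrix (Fin n) (Fin n) ℝ, A.det ≠ 0 ∧
    NonSeparable (latticeOf A) K ∧ d = (volume K).toReal / |A.det|}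

/-!
A lattice of translates of `K` is non-separable as soon as `K` has width at least `1` in the
direction of every nonzero dual lattice vector, that is, as soon as every such vector `u` satisfies
`|⟨u, d⟩| ≥ 1` for some `d ∈ K - K`. Any three points `a, b, c ∈ K - K` give such a lattice of
determinant at least `4 / 9 * Σ`, where `Σ` is the sum of `|det (b, c)|`, `|det (c, a)|` and
`|det (a, b)|`: if one of these numbers is at least the sum of the other two, take the lattice
spanned by the corresponding two points; otherwise they are the side lengths of a triangle, and the
lattice can be written down explicitly.

To make `Σ` large, let `m - r` and `m + r` be the ends of the projection of `K` to the first axis,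
and join the lower boundary of `K` over `m - s` to its upper boundary over `m + s` for
`s = -r cos t`. The resulting points of `K - K`, averaged over the triples of angles
`t, t + π / 3, t + 2π / 3`, give a triple with `Σ ≥ 6√3 / π * |K|`, with equality for an ellipse.
The density is then at most `(4 / 9 * (6√3 / π))⁻¹ = π√3 / 8`.
-/

section Separation

variable {n : ℕ}

/-- The lattice `A · ℤⁿ` is dual admissible for `D` if every nonzero vector `u` of its dual lattice
(the `u` for which `uᵀ A` is integral) satisfies `1 ≤ |⟨u, d⟩|` for some `d ∈ D`. For `D = K - K`
this says that the width of `K` in the direction `u` is at least `1`. -/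
def IsDualAdmissible (A : Matrix (Fin n) (Fin n) ℝ) (D : Set (Fin n → ℝ)) : Prop :=
  ∀ (u : Fin n → ℝ) (m : Fin n → ℤ), m ≠ 0 → u ᵥ* A = (fun i => (m i : ℝ)) →
    ∃ d ∈ D, 1 ≤ |u ⬝ᵥ d|

/-- The functional `⟨u, ·⟩` on the lattice `A · ℤⁿ`, as a homomorphism in the integer
coordinates. -/
def latticeFunctional (A : Matrix (Fin n) (Fin n) ℝ) (u : Fin n → ℝ) : (Fin n → ℤ) →+ ℝ :=
  AddMonoidHom.mk' (fun m => u ⬝ᵥ A *ᵥ fun i => (m i : ℝ)) fun m m' => by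
    rw [← dotProduct_add, ← mulVec_add]
    congr! 2
    ext i
    exact Int.cast_add _ _

lemma latticeFunctional_single (A : Matrix (Fin n) (Fin n) ℝ) (u : Fin n → ℝ) (i : Fin n) :
    latticeFunctional A u (Pi.single i 1) = (u ᵥ* A) i := by
  have hcast : (fun j => ((Pi.single i 1 : Fin n → ℤ) j : ℝ)) = Pi.single i 1 := by
    ext j
    simp [Pi.single_apply]
  change u ⬝ᵥ A *ᵥ _ = _
  rw [hcast, dotProduct_mulVec, dotProduct_single_one]

lemma exists_mem_sub_mem_Icc_of_dense {G : AddSubgroup ℝ} (hG : Dense (G : Set ℝ)) {a b : ℝ}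
    (hab : a < b) (c : ℝ) : ∃ g ∈ G, c - g ∈ Icc a b := by
  obtain ⟨g, hg, hlt, hgt⟩ := hG.exists_between (sub_lt_sub_left hab c)
  exact ⟨g, hg, by linarith, by linarith⟩

lemma exists_mem_sub_mem_Icc_of_mem {G : AddSubgroup ℝ} {g : ℝ} (hg : g ∈ G) (hg0 : g ≠ 0)
    {a b : ℝ} (hab : |g| ≤ b - a) (c : ℝ) : ∃ x ∈ G, c - x ∈ Icc a b := by
  obtain ⟨k, ⟨hle, hlt⟩, -⟩ := existsUnique_sub_zsmul_mem_Ico (abs_pos.2 hg0) c a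
  exact ⟨k • |g|, zsmul_mem (abs_mem_iff.2 hg) k, hle, by linarith⟩

lemma exists_dotProduct_lt_of_nonempty_interior {K : Set (Fin n → ℝ)} (hK : (interior K).Nonempty)
    {u : Fin n → ℝ} (hu : u ≠ 0) : ∃ k ∈ K, ∃ l ∈ K, u ⬝ᵥ k < u ⬝ᵥ l := by
  obtain ⟨p, hp⟩ := hK
  have hline : Continuous fun t : ℝ => p + t • u := by fun_prop
  obtain ⟨t, ht, hmem⟩ := ((hline.tendsto' 0 p (by simp)).eventually
    (isOpen_interior.mem_nhds hp)).exists_gt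
  refine ⟨p, interior_subset hp, p + t • u, interior_subset hmem, ?_⟩
  rw [dotProduct_add, dotProduct_smul, smul_eq_mul]
  exact lt_add_of_pos_right _ (mul_pos ht (dotProduct_self_star_pos_iff.2 hu))

lemma IsDualAdmissible.exists_abs_le_dotProduct_sub {A : Matrix (Fin n) (Fin n) ℝ}
    {K : Set (Fin n → ℝ)} (hA : A.det ≠ 0) (hadm : IsDualAdmissible A (K - K)) {u : Fin n → ℝ}
    (hu : u ≠ 0) {g : ℝ} (hg : ∀ i, ∃ k : ℤ, (u ᵥ* A) i = k * g) :
    g ≠ 0 ∧ ∃ k ∈ K, ∃ l ∈ K, |g| ≤ u ⬝ᵥ l - u ⬝ᵥ k := by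
  choose m hm using hg
  have huA : u ᵥ* A ≠ 0 := fun h => hu (eq_zero_of_vecMul_eq_zero hA h)
  have hg0 : g ≠ 0 := by
    rintro rfl
    exact huA (funext fun i => by simp [hm])
  have hm0 : m ≠ 0 := by
    rintro rfl
    exact huA (funext fun i => by simp [hm])
  have hdual : (g⁻¹ • u) ᵥ* A = fun i => (m i : ℝ) := by
    ext i
    rw [smul_vecMul, Pi.smul_apply, hm, smul_eq_mul]
    field_simp
  obtain ⟨_, ⟨k, hk, l, hl, rfl⟩, hwidth⟩ := hadm _ m hm0 hdual
  have hg_le : |g| ≤ |u ⬝ᵥ k - u ⬝ᵥ l| := by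
    rwa [smul_dotProduct, smul_eq_mul, abs_mul, abs_inv, ← div_eq_inv_mul,
      one_le_div (abs_pos.2 hg0), dotProduct_sub] at hwidth
  rcases le_abs'.1 hg_le with h | h
  · exact ⟨hg0, k, hk, l, hl, by linarith⟩
  · exact ⟨hg0, l, hl, k, hk, h⟩

-- The values of `⟨u, ·⟩` on the lattice form a dense or a cyclic group. In the second case, with
-- generator `g`, the vector `u / g` lies in the dual lattice, so the values on `K` fill the gaps.
lemma IsDualAdmissible.exists_sub_latticeFunctional_mem_Icc {A : Matrix (Fin n) (Fin n) ℝ}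
    {K : Set (Fin n → ℝ)} (hA : A.det ≠ 0) (hadm : IsDualAdmissible A (K - K))
    (hK : (interior K).Nonempty) {u : Fin n → ℝ} (hu : u ≠ 0) (c : ℝ) :
    ∃ m, ∃ k ∈ K, ∃ l ∈ K, c - latticeFunctional A u m ∈ Icc (u ⬝ᵥ k) (u ⬝ᵥ l) := by
  suffices h : ∃ k ∈ K, ∃ l ∈ K, ∃ x ∈ (latticeFunctional A u).range,
      c - x ∈ Icc (u ⬝ᵥ k) (u ⬝ᵥ l) by
    obtain ⟨k, hk, l, hl, _, ⟨m, rfl⟩, hm⟩ := h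
    exact ⟨m, k, hk, l, hl, hm⟩
  rcases AddSubgroup.dense_or_cyclic (latticeFunctional A u).range with hdense | ⟨g, hcyclic⟩
  · obtain ⟨k, hk, l, hl, hkl⟩ := exists_dotProduct_lt_of_nonempty_interior hK hu
    exact ⟨k, hk, l, hl, exists_mem_sub_mem_Icc_of_dense hdense hkl c⟩
  · have hmultiples (i : Fin n) : ∃ k : ℤ, (u ᵥ* A) i = k * g := by
      have hi : (u ᵥ* A) i ∈ (latticeFunctional A u).range :=
        ⟨Pi.single i 1, latticeFunctional_single A u i⟩
      rw [hcyclic] at hi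
      obtain ⟨k, hk⟩ := AddSubgroup.mem_closure_singleton.1 hi
      exact ⟨k, by rw [← hk, zsmul_eq_mul]⟩
    have hgmem : g ∈ (latticeFunctional A u).range :=
      hcyclic ▸ AddSubgroup.subset_closure (mem_singleton g)
    obtain ⟨hg0, k, hk, l, hl, hgap⟩ := hadm.exists_abs_le_dotProduct_sub hA hu hmultiples
    exact ⟨k, hk, l, hl, exists_mem_sub_mem_Icc_of_mem hgmem hg0 hgap c⟩

theorem IsDualAdmissible.nonSeparable {A : Matrix (Fin n) (Fin n) ℝ} {K : Set (Fin n → ℝ)}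
    (hA : A.det ≠ 0) (hadm : IsDualAdmissible A (K - K)) (hKconv : Convex ℝ K)
    (hKint : (interior K).Nonempty) : NonSeparable (latticeOf A) K := by
  intro u hu c
  obtain ⟨m, k, hk, l, hl, hm⟩ := hadm.exists_sub_latticeFunctional_mem_Icc hA hKint hu c
  have hcont : ContinuousOn (fun y => u ⬝ᵥ y) K := by fun_prop
  obtain ⟨y, hy, hyc : u ⬝ᵥ y = c - latticeFunctional A u m⟩ :=
    hKconv.isPreconnected.intermediate_value hk hl hcont hm
  exact ⟨_, ⟨m, rfl⟩, y, hy, by rw [dotProduct_add, hyc]; exact add_sub_cancel _ _⟩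

lemma dTrans_le_of_nonSeparable {A : Matrix (Fin n) (Fin n) ℝ} {K : Set (Fin n → ℝ)}
    (hA : A.det ≠ 0) (hsep : NonSeparable (latticeOf A) K) :
    dTrans K ≤ (volume K).toReal / |A.det| := by
  refine csInf_le ⟨0, ?_⟩ ⟨A, hA, hsep, rfl⟩
  rintro _ ⟨A, -, -, rfl⟩
  positivity

end Separation

section PlanarLattice

variable {D : Set (Fin 2 → ℝ)} {a b c v w : Fin 2 → ℝ}

/-- The signed area of the parallelogram spanned by two vectors of the plane. -/
def planarDet (a b : Fin 2 → ℝ) : ℝ :=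
  a 0 * b 1 - a 1 * b 0

lemma det_transpose_of_pair (v w : Fin 2 → ℝ) : (of ![v, w])ᵀ.det = planarDet v w := by
  rw [det_transpose, det_fin_two]
  rfl

lemma planarDet_smul_add_smul_add_smul (a b c : Fin 2 → ℝ) :
    planarDet b c • a + planarDet c a • b + planarDet a b • c = 0 := by
  ext i
  fin_cases i <;> simp [planarDet] <;> ring

lemma isDualAdmissible_transpose_of_pair
    (h : ∀ (u : Fin 2 → ℝ) (m n : ℤ), m ≠ 0 ∨ n ≠ 0 → u ⬝ᵥ v = m → u ⬝ᵥ w = n →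
      ∃ d ∈ D, 1 ≤ |u ⬝ᵥ d|) :
    IsDualAdmissible (of ![v, w])ᵀ D := by
  intro u m hm hu
  rw [vecMul_transpose] at hu
  refine h u (m 0) (m 1) ?_ ((dotProduct_comm u v).trans (congrFun hu 0))
    ((dotProduct_comm u w).trans (congrFun hu 1))
  contrapose! hm
  ext i
  fin_cases i
  exacts [hm.1, hm.2]

lemma isDualAdmissible_of_mem (ha : a ∈ D) (hb : b ∈ D) :
    IsDualAdmissible (of ![a, b])ᵀ D := by
  refine isDualAdmissible_transpose_of_pair fun u m n hmn hm hn => ?_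
  rcases hmn with h | h
  · exact ⟨a, ha, by rw [hm]; exact_mod_cast Int.one_le_abs h⟩
  · exact ⟨b, hb, by rw [hn]; exact_mod_cast Int.one_le_abs h⟩

lemma one_le_abs_of_strict_extreme {m n k : ℤ} (hm : n < m ∧ k < m ∨ m < n ∧ m < k)
    {s t x : ℝ} (hs : 0 < s) (ht : 0 < t) (hx : (s + t) * x = s * (m - n) + t * (m - k)) :
    1 ≤ |x| := by
  rcases hm with ⟨hn, hk⟩ | ⟨hn, hk⟩
  · have hn' : (n : ℝ) + 1 ≤ m := by exact_mod_cast hn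
    have hk' : (k : ℝ) + 1 ≤ m := by exact_mod_cast hk
    exact le_abs.2 (.inl (le_of_mul_le_mul_left (by nlinarith) (add_pos hs ht)))
  · have hn' : (m : ℝ) + 1 ≤ n := by exact_mod_cast hn
    have hk' : (m : ℝ) + 1 ≤ k := by exact_mod_cast hk
    exact le_abs.2 (.inr (le_of_mul_le_mul_left (by nlinarith) (add_pos hs ht)))

-- If `u` takes the integer values `m` and `n` on the two basis vectors, its values on `a`, `b` and
-- `c` are weighted means of the differences of `m`, `n` and `0`, one of which is strictly extreme.
lemma isDualAdmissible_hexagon {p q r : ℝ} (hp : 0 < p) (hq : 0 < q) (hr : 0 < r)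
    (ha : a ∈ D) (hb : b ∈ D) (hc : c ∈ D)
    (habc : (q + r) • a + (r + p) • b + (p + q) • c = 0) :
    IsDualAdmissible (of ![((r + p) / (p * q + q * r + r * p)) • ((q + r) • a + r • b),
      ((q + r) / (p * q + q * r + r * p)) • (r • a + (r + p) • b)])ᵀ D := by
  refine isDualAdmissible_transpose_of_pair fun u m n hmn hm hn => ?_
  have hrel : (q + r) * u ⬝ᵥ a + (r + p) * u ⬝ᵥ b + (p + q) * u ⬝ᵥ c = 0 := by
    simpa only [dotProduct_add, dotProduct_smul, smul_eq_mul, dotProduct_zero] using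
      congrArg (u ⬝ᵥ ·) habc
  simp only [dotProduct_add, dotProduct_smul, smul_eq_mul] at hm hn
  have hua : (r + q) * u ⬝ᵥ a = r * (m - n) + q * (m - (0 : ℤ)) := by
    rw [← hm, ← hn]
    field_simp
    push_cast
    ring
  have hub : (r + p) * u ⬝ᵥ b = r * (n - m) + p * (n - (0 : ℤ)) := by
    rw [← hm, ← hn]
    field_simp
    push_cast
    ring
  have huc : (q + p) * u ⬝ᵥ c = q * ((0 : ℤ) - m) + p * ((0 : ℤ) - n) := by
    push_cast at hua hub ⊢
    linear_combination hrel - hua - hub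
  have hextreme : (n < m ∧ 0 < m ∨ m < n ∧ m < 0) ∨ (m < n ∧ 0 < n ∨ n < m ∧ n < 0) ∨
      (m < 0 ∧ n < 0 ∨ 0 < m ∧ 0 < n) := by lia
  rcases hextreme with h | h | h
  · exact ⟨a, ha, one_le_abs_of_strict_extreme h hr hq hua⟩
  · exact ⟨b, hb, one_le_abs_of_strict_extreme h hr hp hub⟩
  · exact ⟨c, hc, one_le_abs_of_strict_extreme h hq hp huc⟩

lemma planarDet_hexagon {p q r : ℝ} (hp : 0 < p) (hq : 0 < q) (hr : 0 < r) :
    planarDet (((r + p) / (p * q + q * r + r * p)) • ((q + r) • a + r • b))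
      (((q + r) / (p * q + q * r + r * p)) • (r • a + (r + p) • b)) =
      (q + r) * (r + p) / (p * q + q * r + r * p) * planarDet a b := by
  simp only [planarDet, Pi.smul_apply, Pi.add_apply, smul_eq_mul]
  field_simp
  ring

lemma eight_mul_sum_mul_sum_le (p q r : ℝ) (hp : 0 ≤ p) (hq : 0 ≤ q) (hr : 0 ≤ r) :
    8 * (p + q + r) * (p * q + q * r + r * p) ≤ 9 * ((p + q) * (q + r) * (r + p)) := by
  have hp' := mul_nonneg hp (sq_nonneg (q - r))
  have hq' := mul_nonneg hq (sq_nonneg (r - p))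
  have hr' := mul_nonneg hr (sq_nonneg (p - q))
  linarith

lemma exists_mem_abs_smul_eq (hD : ∀ d ∈ D, -d ∈ D) (ha : a ∈ D) (x : ℝ) :
    ∃ a' ∈ D, |x| • a' = x • a ∧ (a' = a ∨ a' = -a) := by
  rcases abs_choice x with h | h
  · exact ⟨a, ha, by rw [h], .inl rfl⟩
  · exact ⟨-a, hD a ha, by rw [h, neg_smul_neg], .inr rfl⟩

lemma abs_planarDet_eq {a' b' : Fin 2 → ℝ} (ha : a' = a ∨ a' = -a) (hb : b' = b ∨ b' = -b) :
    |planarDet a' b'| = |planarDet a b| := by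
  have hneg (x y : Fin 2 → ℝ) : planarDet (-x) y = -planarDet x y := by
    simp only [planarDet, Pi.neg_apply]
    ring
  have hneg' (x y : Fin 2 → ℝ) : planarDet x (-y) = -planarDet x y := by
    simp only [planarDet, Pi.neg_apply]
    ring
  rcases ha with rfl | rfl <;> rcases hb with rfl | rfl <;> simp only [hneg, hneg', abs_neg]

lemma exists_isDualAdmissible_of_triangle (hD : ∀ d ∈ D, -d ∈ D)
    (ha : a ∈ D) (hb : b ∈ D) (hc : c ∈ D)
    (hbc : |planarDet b c| < |planarDet c a| + |planarDet a b|)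
    (hca : |planarDet c a| < |planarDet a b| + |planarDet b c|)
    (hab : |planarDet a b| < |planarDet b c| + |planarDet c a|) :
    ∃ A : Matrix (Fin 2) (Fin 2) ℝ, IsDualAdmissible A D ∧
      4 / 9 * (|planarDet b c| + |planarDet c a| + |planarDet a b|) ≤ |A.det| := by
  obtain ⟨a', ha', hxa, haa'⟩ := exists_mem_abs_smul_eq hD ha (planarDet b c)
  obtain ⟨b', hb', hyb, hbb'⟩ := exists_mem_abs_smul_eq hD hb (planarDet c a)
  obtain ⟨c', hc', hzc, -⟩ := exists_mem_abs_smul_eq hD hc (planarDet a b)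
  have hrel := planarDet_smul_add_smul_add_smul a b c
  rw [← hxa, ← hyb, ← hzc] at hrel
  have hdet := abs_planarDet_eq haa' hbb'
  -- Ravi substitution: the three determinants are the side lengths of a triangle.
  obtain ⟨p, q, r, hp, hq, hr, hx, hy, hz⟩ : ∃ p q r : ℝ, 0 < p ∧ 0 < q ∧ 0 < r ∧
      |planarDet b c| = q + r ∧ |planarDet c a| = r + p ∧ |planarDet a b| = p + q :=
    ⟨(|planarDet c a| + |planarDet a b| - |planarDet b c|) / 2,
      (|planarDet a b| + |planarDet b c| - |planarDet c a|) / 2,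
      (|planarDet b c| + |planarDet c a| - |planarDet a b|) / 2,
      by linarith, by linarith, by linarith, by ring, by ring, by ring⟩
  rw [hx, hy, hz] at hrel
  refine ⟨_, isDualAdmissible_hexagon hp hq hr ha' hb' hc' hrel, ?_⟩
  rw [det_transpose_of_pair, planarDet_hexagon hp hq hr, abs_mul, hdet, hx, hy, hz,
    abs_of_nonneg (by positivity), div_mul_eq_mul_div ((q + r) * (r + p)),
    le_div_iff₀ (by positivity)]
  linarith [eight_mul_sum_mul_sum_le p q r hp.le hq.le hr.le]

theorem exists_isDualAdmissible_sum_abs_planarDet_le (hD : ∀ d ∈ D, -d ∈ D)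
    (ha : a ∈ D) (hb : b ∈ D) (hc : c ∈ D) :
    ∃ A : Matrix (Fin 2) (Fin 2) ℝ, IsDualAdmissible A D ∧
      4 / 9 * (|planarDet b c| + |planarDet c a| + |planarDet a b|) ≤ |A.det| := by
  by_cases hbc : |planarDet c a| + |planarDet a b| ≤ |planarDet b c|
  · refine ⟨_, isDualAdmissible_of_mem hb hc, ?_⟩
    rw [det_transpose_of_pair]
    linarith [abs_nonneg (planarDet b c)]
  by_cases hca : |planarDet a b| + |planarDet b c| ≤ |planarDet c a|
  · refine ⟨_, isDualAdmissible_of_mem hc ha, ?_⟩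
    rw [det_transpose_of_pair]
    linarith [abs_nonneg (planarDet c a)]
  by_cases hab : |planarDet b c| + |planarDet c a| ≤ |planarDet a b|
  · refine ⟨_, isDualAdmissible_of_mem ha hb, ?_⟩
    rw [det_transpose_of_pair]
    linarith [abs_nonneg (planarDet a b)]
  exact exists_isDualAdmissible_of_triangle hD ha hb hc (not_le.1 hbc) (not_le.1 hca)
    (not_le.1 hab)

end PlanarLattice

section Boundary

variable {X : Type*} {S : Set (X × ℝ)}

/-- The upper boundary function of `S ⊆ X × ℝ`, which assigns to `x` the supremum of the section
`{y | (x, y) ∈ S}`. It takes the junk value `0` where that section is empty or unbounded above. -/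
def upperBoundary (S : Set (X × ℝ)) (x : X) : ℝ :=
  sSup (Prod.mk x ⁻¹' S)

/-- The lower boundary function of `S ⊆ X × ℝ`, which assigns to `x` the infimum of the section
`{y | (x, y) ∈ S}`. It takes the junk value `0` where that section is empty or unbounded below. -/
def lowerBoundary (S : Set (X × ℝ)) (x : X) : ℝ :=
  sInf (Prod.mk x ⁻¹' S)

lemma mk_preimage_eq_empty {x : X} (hx : x ∉ Prod.fst '' S) : Prod.mk x ⁻¹' S = ∅ :=
  eq_empty_of_forall_notMem fun _ hy => hx ⟨_, hy, rfl⟩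

lemma mk_preimage_nonempty {x : X} (hx : x ∈ Prod.fst '' S) : (Prod.mk x ⁻¹' S).Nonempty := by
  obtain ⟨⟨_, y⟩, hy, rfl⟩ := hx
  exact ⟨y, hy⟩

lemma upperBoundary_of_notMem {x : X} (hx : x ∉ Prod.fst '' S) : upperBoundary S x = 0 := by
  rw [upperBoundary, mk_preimage_eq_empty hx, Real.sSup_empty]

lemma lowerBoundary_eq_neg_upperBoundary (S : Set (X × ℝ)) :
    lowerBoundary S = -upperBoundary (Prod.map id Neg.neg ⁻¹' S) :=
  funext fun _ => Real.sInf_def _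

variable [TopologicalSpace X]

lemma isCompact_mk_preimage [T1Space X] (hS : IsCompact S) (x : X) :
    IsCompact (Prod.mk x ⁻¹' S) := by
  have hrange : range (Prod.mk x : ℝ → X × ℝ) = Prod.fst ⁻¹' {x} := by
    ext ⟨x', y⟩
    simp [eq_comm]
  refine Topology.IsClosedEmbedding.isCompact_preimage ⟨isEmbedding_prodMkRight x, ?_⟩ hS
  rw [hrange]
  exact isClosed_singleton.preimage continuous_fst

lemma isCompact_map_neg_preimage (hS : IsCompact S) :
    IsCompact (Prod.map id Neg.neg ⁻¹' S) :=
  ((Homeomorph.refl X).prodCongr (Homeomorph.neg ℝ)).isCompact_preimage.2 hS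

lemma mk_upperBoundary_mem [T1Space X] (hS : IsCompact S) {x : X} (hx : x ∈ Prod.fst '' S) :
    (x, upperBoundary S x) ∈ S :=
  (isCompact_mk_preimage hS x).sSup_mem (mk_preimage_nonempty hx)

lemma mk_lowerBoundary_mem [T1Space X] (hS : IsCompact S) {x : X} (hx : x ∈ Prod.fst '' S) :
    (x, lowerBoundary S x) ∈ S :=
  (isCompact_mk_preimage hS x).sInf_mem (mk_preimage_nonempty hx)

lemma upperBoundary_preimage_Ici [T1Space X] (hS : IsCompact S) (c : ℝ) :
    upperBoundary S ⁻¹' Ici c =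
      Prod.fst '' (S ∩ {p | c ≤ p.2}) ∪ ((Prod.fst '' S)ᶜ ∩ {_x | c ≤ 0}) := by
  ext x
  by_cases hx : x ∈ Prod.fst '' S
  · have hle (y : ℝ) (hy : (x, y) ∈ S) : y ≤ upperBoundary S x :=
      le_csSup (isCompact_mk_preimage hS x).bddAbove hy
    simp only [mem_preimage, mem_Ici, mem_union, mem_inter_iff, mem_compl_iff, hx,
      not_true_eq_false, false_and, or_false]
    constructor
    · exact fun hc => ⟨_, ⟨mk_upperBoundary_mem hS hx, hc⟩, rfl⟩
    · rintro ⟨⟨_, y⟩, ⟨hy, hcy⟩, rfl⟩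
      exact le_trans hcy (hle y hy)
  · have hx' : x ∉ Prod.fst '' (S ∩ {p | c ≤ p.2}) := fun h => hx (image_mono inter_subset_left h)
    simp only [mem_preimage, mem_Ici, mem_union, mem_inter_iff, mem_compl_iff, hx, hx',
      upperBoundary_of_notMem hx, not_false_eq_true, true_and, false_or, mem_ofPred_eq]

lemma exists_abs_upperBoundary_le [T1Space X] (hS : IsCompact S) :
    ∃ M, ∀ x, |upperBoundary S x| ≤ M := by
  obtain ⟨M, hM⟩ := hS.exists_bound_of_continuousOn continuous_snd.continuousOn
  refine ⟨max M 0, fun x => ?_⟩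
  by_cases hx : x ∈ Prod.fst '' S
  · exact le_max_of_le_left (hM _ (mk_upperBoundary_mem hS hx))
  · simp [upperBoundary_of_notMem hx]

lemma volume_real_mk_preimage [T1Space X] [AddCommGroup X] [Module ℝ X] (hS : IsCompact S)
    (hSconv : Convex ℝ S) (x : X) :
    volume.real (Prod.mk x ⁻¹' S) = upperBoundary S x - lowerBoundary S x := by
  rcases (Prod.mk x ⁻¹' S).eq_empty_or_nonempty with hempty | hne
  · simp [upperBoundary, lowerBoundary, hempty]
  · have hconv : Convex ℝ (Prod.mk x ⁻¹' S) :=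
      hSconv.affine_preimage ((AffineMap.const ℝ ℝ x).prod (AffineMap.id ℝ ℝ))
    have hcompact := isCompact_mk_preimage hS x
    have hsection : Prod.mk x ⁻¹' S = Icc (lowerBoundary S x) (upperBoundary S x) :=
      eq_Icc_of_connected_compact (hconv.isConnected hne) hcompact
    have hle : lowerBoundary S x ≤ upperBoundary S x :=
      csInf_le_csSup hne hcompact.bddBelow hcompact.bddAbove
    rw [hsection, Real.volume_real_Icc_of_le hle]

variable [MeasurableSpace X] [OpensMeasurableSpace X] [T2Space X]

lemma measurable_upperBoundary (hS : IsCompact S) : Measurable (upperBoundary S) := by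
  refine measurable_of_Ici fun c => ?_
  rw [upperBoundary_preimage_Ici hS]
  have hupper : IsCompact (S ∩ {p | c ≤ p.2}) :=
    hS.inter_right (isClosed_le continuous_const continuous_snd)
  exact (hupper.image continuous_fst).measurableSet.union
    ((hS.image continuous_fst).measurableSet.compl.inter (.const _))

lemma integrable_upperBoundary (μ : Measure X) [IsFiniteMeasureOnCompacts μ] (hS : IsCompact S) :
    Integrable (upperBoundary S) μ := by
  obtain ⟨M, hM⟩ := exists_abs_upperBoundary_le hS
  have hproj : IsCompact (Prod.fst '' S) := hS.image continuous_fst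
  refine IntegrableOn.integrable_of_forall_notMem_eq_zero (s := Prod.fst '' S) ?_
    fun x => upperBoundary_of_notMem
  exact Measure.integrableOn_of_bounded hproj.measure_lt_top.ne
    (measurable_upperBoundary hS).aestronglyMeasurable (.of_forall hM)

lemma integrable_lowerBoundary (μ : Measure X) [IsFiniteMeasureOnCompacts μ] (hS : IsCompact S) :
    Integrable (lowerBoundary S) μ := by
  rw [lowerBoundary_eq_neg_upperBoundary]
  exact (integrable_upperBoundary μ (isCompact_map_neg_preimage hS)).neg

lemma measureReal_prod_volume_eq_integral [AddCommGroup X] [Module ℝ X] (μ : Measure X) [SFinite μ]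
    (hS : IsCompact S) (hSconv : Convex ℝ S) :
    (μ.prod volume).real S = ∫ x, (upperBoundary S x - lowerBoundary S x) ∂μ := by
  rw [Measure.real, Measure.prod_apply hS.measurableSet, ← integral_toReal]
  · exact integral_congr_ae (.of_forall fun x => volume_real_mk_preimage hS hSconv x)
  · exact (measurable_measure_prodMk_left hS.measurableSet).aemeasurable
  · exact .of_forall fun x => (isCompact_mk_preimage hS x).measure_lt_top

end Boundary

section Averaging

lemma hasDerivAt_neg_mul_cos (r t : ℝ) :
    HasDerivAt (fun t => -(r * Real.cos t)) (r * Real.sin t) t := by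
  simpa only [mul_neg, neg_neg] using ((Real.hasDerivAt_cos t).const_mul r).fun_neg

lemma mul_sin_nonneg {r : ℝ} (hr : 0 ≤ r) :
    ∀ t ∈ Ioo (min 0 Real.pi) (max 0 Real.pi), 0 ≤ r * Real.sin t := by
  rw [min_eq_left Real.pi_pos.le, max_eq_right Real.pi_pos.le]
  exact fun t ht => mul_nonneg hr (Real.sin_pos_of_mem_Ioo ht).le

lemma integral_mul_sin_mul_comp_neg_mul_cos (f : ℝ → ℝ) {r : ℝ} (hr : 0 ≤ r) :
    ∫ t in 0..Real.pi, r * Real.sin t * f (-(r * Real.cos t)) = ∫ s in -r..r, f s := by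
  simpa using intervalIntegral.integral_deriv_smul_comp_of_deriv_nonneg (g := f)
    (by fun_prop) (fun t _ => hasDerivAt_neg_mul_cos r t) (mul_sin_nonneg hr)

lemma intervalIntegrable_mul_sin_mul_comp_neg_mul_cos_iff {f : ℝ → ℝ} {r : ℝ} (hr : 0 ≤ r) :
    IntervalIntegrable (fun t => r * Real.sin t * f (-(r * Real.cos t))) volume 0 Real.pi ↔
      IntervalIntegrable f volume (-r) r := by
  simpa using intervalIntegral.integrable_deriv_smul_comp_iff_of_deriv_nonneg (g := f)
    (by fun_prop) (fun t _ => hasDerivAt_neg_mul_cos r t) (mul_sin_nonneg hr)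

lemma exists_integral_le_mul_sum {f : ℝ → ℝ} {h : ℝ} (hh : 0 < h) (n : ℕ)
    (hf : IntervalIntegrable f volume 0 (n * h)) :
    ∃ t, ∫ x in 0..n * h, f x ≤ h * ∑ i ∈ Finset.range n, f (t + i * h) := by
  have hpiece (i : ℕ) (hi : i < n) : IntervalIntegrable f volume (i * h) ((i + 1 : ℕ) * h) := by
    have hi' : ((i + 1 : ℕ) : ℝ) ≤ n := by exact_mod_cast hi
    have hmono : (i : ℝ) * h ≤ (i + 1 : ℕ) * h := by gcongr; lia
    have hsub : Icc (i * h) ((i + 1 : ℕ) * h) ⊆ Icc 0 (n * h) :=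
      Icc_subset_Icc (by positivity) (by gcongr)
    rw [← uIcc_of_le hmono, ← uIcc_of_le (by positivity)] at hsub
    exact hf.mono_set hsub
  have hshift (i : ℕ) (hi : i < n) : IntervalIntegrable (fun x => f (x + i * h)) volume 0 h := by
    convert (hpiece i hi).comp_add_right (i * h) using 1
    · ring
    · push_cast
      ring
  have hint : IntervalIntegrable (fun x => ∑ i ∈ Finset.range n, f (x + i * h)) volume 0 h :=
    (IntervalIntegrable.sum _ fun i hi => hshift i (Finset.mem_range.1 hi)).congr
      fun x _ => Finset.sum_apply x _ _
  have hsum : ∫ x in 0..h, ∑ i ∈ Finset.range n, f (x + i * h) = ∫ x in 0..n * h, f x := by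
    rw [intervalIntegral.integral_finsetSum fun i hi => hshift i (Finset.mem_range.1 hi)]
    have hadj := intervalIntegral.sum_integral_adjacent_intervals (a := fun i : ℕ => i * h) hpiece
    rw [Nat.cast_zero, zero_mul] at hadj
    rw [← hadj]
    refine Finset.sum_congr rfl fun i _ => ?_
    rw [intervalIntegral.integral_comp_add_right]
    congr 1
    · ring
    · push_cast
      ring
  obtain ⟨t, -, ht⟩ := exists_setAverage_le (by simp [hh]) (by simp)
    ((intervalIntegrable_iff_integrableOn_Ioc_of_le hh.le).1 hint)
  refine ⟨t, ?_⟩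
  rw [setAverage_eq, ← intervalIntegral.integral_of_le hh.le, hsum, smul_eq_mul,
    Real.volume_real_Ioc_of_le hh.le, sub_zero, inv_mul_le_iff₀ hh] at ht
  exact ht

end Averaging

section InscribedHexagon

variable {S : Set (ℝ × ℝ)} {m r : ℝ}

lemma exists_image_fst_eq_Icc (hS : IsCompact S) (hSconv : Convex ℝ S) (hSne : S.Nonempty) :
    ∃ m r : ℝ, 0 ≤ r ∧ Prod.fst '' S = Icc (m - r) (m + r) := by
  have hproj := eq_Icc_of_connected_compact
    ((hSconv.isConnected hSne).image _ continuous_fst.continuousOn) (hS.image continuous_fst)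
  have hle : sInf (Prod.fst '' S) ≤ sSup (Prod.fst '' S) := by
    rw [← nonempty_Icc, ← hproj]
    exact hSne.image _
  refine ⟨(sInf (Prod.fst '' S) + sSup (Prod.fst '' S)) / 2,
    (sSup (Prod.fst '' S) - sInf (Prod.fst '' S)) / 2, by linarith, ?_⟩
  refine hproj.trans ?_
  congr 1 <;> ring

/-- The height over `2 * s` of the point of `S - S` that joins the lower boundary of `S` over
`m - s` to its upper boundary over `m + s`. -/
def chordHeight (S : Set (ℝ × ℝ)) (m s : ℝ) : ℝ :=
  upperBoundary S (m + s) - lowerBoundary S (m - s)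

lemma mk_chordHeight_mem_sub (hS : IsCompact S) (hproj : Prod.fst '' S = Icc (m - r) (m + r))
    {s : ℝ} (hs : s ∈ Icc (-r) r) : (2 * s, chordHeight S m s) ∈ S - S := by
  have hadd : m + s ∈ Prod.fst '' S := hproj ▸ ⟨by linarith [hs.1], by linarith [hs.2]⟩
  have hsub : m - s ∈ Prod.fst '' S := hproj ▸ ⟨by linarith [hs.2], by linarith [hs.1]⟩
  refine ⟨_, mk_upperBoundary_mem hS hadd, _, mk_lowerBoundary_mem hS hsub, ?_⟩
  ext
  · change m + s - (m - s) = 2 * s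
    ring
  · rfl

lemma integrable_chordHeight (hS : IsCompact S) (m : ℝ) : Integrable (chordHeight S m) :=
  ((integrable_upperBoundary volume hS).comp_add_left m).sub
    ((integrable_lowerBoundary volume hS).comp_sub_left m)

lemma chordHeight_eq_zero (hproj : Prod.fst '' S = Icc (m - r) (m + r)) {s : ℝ}
    (hs : s ∉ Icc (-r) r) : chordHeight S m s = 0 := by
  have hadd : m + s ∉ Prod.fst '' S := fun h => by
    rw [hproj] at h
    exact hs ⟨by linarith [h.1], by linarith [h.2]⟩
  have hsub : m - s ∉ Prod.fst '' S := fun h => by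
    rw [hproj] at h
    exact hs ⟨by linarith [h.2], by linarith [h.1]⟩
  simp [chordHeight, upperBoundary, lowerBoundary, mk_preimage_eq_empty hadd,
    mk_preimage_eq_empty hsub]

lemma integral_chordHeight (hS : IsCompact S) (hSconv : Convex ℝ S) (hr : 0 ≤ r)
    (hproj : Prod.fst '' S = Icc (m - r) (m + r)) :
    ∫ s in -r..r, chordHeight S m s = volume.real S := by
  have hupper := integrable_upperBoundary volume hS
  have hlower := integrable_lowerBoundary volume hS
  calc ∫ s in -r..r, chordHeight S m s
    _ = ∫ s, chordHeight S m s := by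
      rw [intervalIntegral.integral_of_le (by linarith), ← integral_Icc_eq_integral_Ioc,
        setIntegral_eq_integral_of_forall_compl_eq_zero fun s => chordHeight_eq_zero hproj]
    _ = (∫ x, upperBoundary S x) - ∫ x, lowerBoundary S x := by
      rw [← integral_add_left_eq_self (upperBoundary S) m,
        ← integral_sub_left_eq_self (lowerBoundary S) volume m]
      exact integral_sub (hupper.comp_add_left m) (hlower.comp_sub_left m)
    _ = volume.real S := by
      rw [← integral_sub hupper hlower, Measure.volume_eq_prod,
        measureReal_prod_volume_eq_integral volume hS hSconv]

lemma two_mul_sqrt_three_mul_sum_le (r t y₀ y₁ y₂ : ℝ) :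
    2 * √3 * (r * Real.sin t * y₀ + r * Real.sin (t + Real.pi / 3) * y₁ +
        r * Real.sin (t + 2 * (Real.pi / 3)) * y₂) ≤
      |planarDet ![2 * -(r * Real.cos (t + Real.pi / 3)), y₁]
          ![2 * -(r * Real.cos (t + 2 * (Real.pi / 3))), y₂]| +
        |planarDet ![2 * -(r * Real.cos (t + 2 * (Real.pi / 3))), y₂]
          ![2 * -(r * Real.cos t), y₀]| +
        |planarDet ![2 * -(r * Real.cos t), y₀] ![2 * -(r * Real.cos (t + Real.pi / 3)), y₁]| := by
  have hsqrt : √3 * √3 = 3 := Real.mul_self_sqrt (by norm_num)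
  have hcos : Real.cos (2 * (Real.pi / 3)) = -1 / 2 := by
    rw [Real.cos_two_mul, Real.cos_pi_div_three]
    norm_num
  have hsin : Real.sin (2 * (Real.pi / 3)) = √3 / 2 := by
    rw [Real.sin_two_mul, Real.cos_pi_div_three, Real.sin_pi_div_three]
    ring
  refine le_trans (le_of_eq ?_) (add_le_add_three (neg_le_abs _) (le_abs_self _) (neg_le_abs _))
  simp only [planarDet, Real.cos_add, Real.sin_add, hcos, hsin, Real.cos_pi_div_three,
    Real.sin_pi_div_three, cons_val_zero, cons_val_one]
  linear_combination (r * Real.cos t * (y₁ + y₂)) * hsqrt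

-- `∫₀^π r sin t · chordHeight S m (-r cos t) dt` is the area of `S`, so for some `t` the integrand
-- at `t`, `t + π / 3` and `t + 2π / 3` adds up to at least `3 / π` times the area.
lemma exists_mem_sub_prod_le_sum_abs_planarDet (hS : IsCompact S) (hSconv : Convex ℝ S)
    (hSne : S.Nonempty) :
    ∃ a ∈ S - S, ∃ b ∈ S - S, ∃ c ∈ S - S, 6 * √3 / Real.pi * volume.real S ≤
      |planarDet ![b.1, b.2] ![c.1, c.2]| + |planarDet ![c.1, c.2] ![a.1, a.2]| +
        |planarDet ![a.1, a.2] ![b.1, b.2]| := by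
  obtain ⟨m, r, hr, hproj⟩ := exists_image_fst_eq_Icc hS hSconv hSne
  have hint := (intervalIntegrable_mul_sin_mul_comp_neg_mul_cos_iff hr).2
    (integrable_chordHeight hS m).intervalIntegrable
  have hpi : ((3 : ℕ) : ℝ) * (Real.pi / 3) = Real.pi := by
    push_cast
    ring
  obtain ⟨t, ht⟩ := exists_integral_le_mul_sum (by positivity : 0 < Real.pi / 3) 3
    (by rwa [hpi])
  rw [hpi, integral_mul_sin_mul_comp_neg_mul_cos _ hr,
    integral_chordHeight hS hSconv hr hproj] at ht
  have hmem (θ : ℝ) := mk_chordHeight_mem_sub hS hproj (s := -(r * Real.cos θ))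
    ⟨by nlinarith [Real.cos_le_one θ], by nlinarith [Real.neg_one_le_cos θ]⟩
  refine ⟨_, hmem t, _, hmem (t + Real.pi / 3), _, hmem (t + 2 * (Real.pi / 3)), ?_⟩
  refine le_trans ?_ (two_mul_sqrt_three_mul_sum_le r t _ _ _)
  simp only [Finset.sum_range_succ, Finset.sum_range_zero, Nat.cast_zero, Nat.cast_one,
    Nat.cast_ofNat, zero_mul, one_mul, zero_add, add_zero] at ht
  have hconst : 6 * √3 / Real.pi * (Real.pi / 3) = 2 * √3 := by
    field_simp
    norm_num
  rw [← hconst, mul_assoc]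
  exact mul_le_mul_of_nonneg_left ht (by positivity)

theorem exists_mem_sub_le_sum_abs_planarDet {K : Set (Fin 2 → ℝ)} (hK : IsCompact K)
    (hKconv : Convex ℝ K) (hKne : K.Nonempty) :
    ∃ a ∈ K - K, ∃ b ∈ K - K, ∃ c ∈ K - K, 6 * √3 / Real.pi * volume.real K ≤
      |planarDet b c| + |planarDet c a| + |planarDet a b| := by
  let e := ContinuousLinearEquiv.finTwoArrow ℝ ℝ
  obtain ⟨_, ⟨a, ha, rfl⟩, _, ⟨b, hb, rfl⟩, _, ⟨c, hc, rfl⟩, h⟩ :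
      ∃ a ∈ e '' (K - K), ∃ b ∈ e '' (K - K), ∃ c ∈ e '' (K - K),
        6 * √3 / Real.pi * volume.real (e '' K) ≤
      |planarDet ![b.1, b.2] ![c.1, c.2]| + |planarDet ![c.1, c.2] ![a.1, a.2]| +
        |planarDet ![a.1, a.2] ![b.1, b.2]| := by
    rw [image_sub]
    exact exists_mem_sub_prod_le_sum_abs_planarDet (hK.image e.continuous)
      (hKconv.linear_image e.toLinearMap) (hKne.image e)
  have hvol : volume (e '' K) = volume K := by
    have hpres := (volume_preserving_finTwoArrow ℝ).measure_preimage_equiv (e '' K)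
    rw [← hpres]
    exact congrArg volume (e.injective.preimage_image K)
  rw [measureReal_def, hvol] at h
  exact ⟨a, ha, b, hb, c, hc, h⟩

end InscribedHexagon

/-- For every convex body `K ⊆ ℝ²` one has `d_{2,1}(K) ≤ π√3/8`. -/
theorem d21_le_pi_sqrt_three_div_eight (K : Set (Fin 2 → ℝ))
    (hKc : IsCompact K) (hKconv : Convex ℝ K) (hKint : (interior K).Nonempty) :
    dTrans K ≤ Real.pi * Real.sqrt 3 / 8 := by
  have hvol : 0 < volume.real K :=
    ENNReal.toReal_pos (Measure.measure_pos_of_nonempty_interior volume hKint).ne'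
      hKc.measure_lt_top.ne
  have hsymm (d) (hd : d ∈ K - K) : -d ∈ K - K := by
    rwa [← neg_sub K K, neg_mem_neg]
  obtain ⟨a, ha, b, hb, c, hc, harea⟩ :=
    exists_mem_sub_le_sum_abs_planarDet hKc hKconv (hKint.mono interior_subset)
  obtain ⟨A, hadm, hA⟩ := exists_isDualAdmissible_sum_abs_planarDet_le hsymm ha hb hc
  have hdet : 4 / 9 * (6 * √3 / Real.pi * volume.real K) ≤ |A.det| := by linarith
  have hdet_pos : 0 < |A.det| := lt_of_lt_of_le (by positivity) hdet
  have hdet_ne : A.det ≠ 0 := abs_pos.1 hdet_pos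
  have hvol_eq : volume.real K =
      Real.pi * √3 / 8 * (4 / 9 * (6 * √3 / Real.pi * volume.real K)) := by
    have hsqrt : √3 ^ 2 = 3 := Real.sq_sqrt (by norm_num)
    field_simp
    linear_combination (-24) * hsqrt
  refine (dTrans_le_of_nonSeparable hdet_ne
    (hadm.nonSeparable hdet_ne hKconv hKint)).trans ((div_le_iff₀ hdet_pos).2 ?_)
  exact hvol_eq.trans_le (mul_le_mul_of_nonneg_left hdet (by positivity))
end
end

section
/- If K is a convex body in ℝ² with d_{2,1}(K) = π√3/8, then K is an ellipse, i.e., the image of the closed unit disc under an invertible affine transformation. -/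
open MeasureTheory Set Matrix Pointwise

noncomputable section

/-- An ellipse: the image of the closed unit disc under an invertible affine map. -/
def IsEllipse (K : Set (Fin 2 → ℝ)) : Prop :=
  ∃ A : Matrix (Fin 2) (Fin 2) ℝ, A.det ≠ 0 ∧ ∃ v : Fin 2 → ℝ,
    K = (fun x => A.mulVec x + v) '' {x : Fin 2 → ℝ | x ⬝ᵥ x ≤ 1}

/-!
Let `M = (K - K) / 2`. A lattice `Λ + K` is non-separable as soon as every functional that takes
integer values on `Λ` has width at least `1` on `K`. Choosing the lattice suited to a centrally
symmetric hexagon inscribed in `M`, one finds that `d(K) ≥ π√3/8` bounds the area of such a hexagon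
by `3√3/(2π) · |K|`, with equality only if the hexagon is affinely regular.

Conversely, let `K` lie between the lines `x = m ± w`. Write `x = m + w cos t` and consider the
hexagons in `M` whose vertices have first coordinates `w cos t`, `w cos (t + π/3)`,
`w cos (t + 2π/3)`. Their areas, averaged over `t`, attain the bound, so for every `t` some such
hexagon does. This determines the width of `K` in every direction from any single extremal hexagon:
if that hexagon is normalised to a regular one inscribed in the unit circle, then `M` is contained
in the unit disc, and every unit vector is half of a chord of `K`. By the parallelogram law that
chord is unique, so its endpoints can be computed from two coordinate directions; they run through
a circle, and `K` is the disc it bounds.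
-/

section HalfDifferenceBody

variable {E F : Type*} [AddCommGroup E] [Module ℝ E] [AddCommGroup F] [Module ℝ F]

/-- The half difference body `(K - K) / 2`: the centrally symmetric set that has the same width
as `K` in every direction. -/
def halfDiff (K : Set E) : Set E :=
  (2⁻¹ : ℝ) • (K - K)

lemma mem_halfDiff {K : Set E} {q : E} :
    q ∈ halfDiff K ↔ ∃ p ∈ K, ∃ p' ∈ K, (2⁻¹ : ℝ) • (p - p') = q := by
  simp only [halfDiff, mem_smul_set, mem_sub, exists_exists_and_exists_and_eq_and]

lemma smul_sub_mem_halfDiff {K : Set E} {p p' : E} (hp : p ∈ K) (hp' : p' ∈ K) :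
    (2⁻¹ : ℝ) • (p - p') ∈ halfDiff K :=
  mem_halfDiff.2 ⟨p, hp, p', hp', rfl⟩

lemma neg_mem_halfDiff {K : Set E} {q : E} (hq : q ∈ halfDiff K) : -q ∈ halfDiff K := by
  obtain ⟨p, hp, p', hp', rfl⟩ := mem_halfDiff.1 hq
  exact mem_halfDiff.2 ⟨p', hp', p, hp, by rw [← smul_neg, neg_sub]⟩

lemma halfDiff_image (f : E →ₗ[ℝ] F) (K : Set E) : halfDiff (f '' K) = f '' halfDiff K := by
  rw [halfDiff, halfDiff, image_smul_set, image_sub]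

lemma isCompact_halfDiff [TopologicalSpace E] [IsTopologicalAddGroup E]
    [ContinuousConstSMul ℝ E] {K : Set E} (hK : IsCompact K) :
    IsCompact (halfDiff K) := by
  rw [halfDiff, sub_eq_add_neg]
  exact (hK.add hK.neg).smul _

end HalfDifferenceBody

section NonSeparable

variable {n : ℕ} {A : Matrix (Fin n) (Fin n) ℝ} {K : Set (Fin n → ℝ)}

/-- The group of values on the lattice `A · ℤⁿ` of the linear functional `⟨u, ·⟩`. -/
def latticeValues (A : Matrix (Fin n) (Fin n) ℝ) (u : Fin n → ℝ) : AddSubgroup ℝ where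
  carrier := (u ⬝ᵥ ·) '' latticeOf A
  zero_mem' := ⟨0, ⟨0, by ext; simp [mulVec, dotProduct]⟩, dotProduct_zero u⟩
  add_mem' := by
    rintro _ _ ⟨_, ⟨m, rfl⟩, rfl⟩ ⟨_, ⟨k, rfl⟩, rfl⟩
    refine ⟨_, ⟨m + k, rfl⟩, ?_⟩
    simp only [← dotProduct_add, ← mulVec_add]
    congr 2; ext; simp
  neg_mem' := by
    rintro _ ⟨_, ⟨m, rfl⟩, rfl⟩
    refine ⟨_, ⟨-m, rfl⟩, ?_⟩
    simp only [← dotProduct_neg, ← mulVec_neg]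
    congr 2; ext; simp

lemma vecMul_apply_mem_latticeValues (A : Matrix (Fin n) (Fin n) ℝ) (u : Fin n → ℝ) (i : Fin n) :
    (u ᵥ* A) i ∈ latticeValues A u := by
  refine ⟨_, ⟨Pi.single i 1, rfl⟩, ?_⟩
  have hcast : (fun j => ((Pi.single i 1 : Fin n → ℤ) j : ℝ)) = Pi.single i 1 := by
    ext j; simp [Pi.single_apply]
  simp only [hcast, dotProduct_mulVec, dotProduct_single_one]

lemma nonSeparable_latticeOf_iff :
    NonSeparable (latticeOf A) K ↔
      ∀ u ≠ 0, ∀ c, ∃ z ∈ latticeValues A u, c - z ∈ (u ⬝ᵥ ·) '' K := by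
  refine forall₃_congr fun u _ c => ⟨?_, ?_⟩
  · rintro ⟨x, hx, y, hy, rfl⟩
    exact ⟨_, ⟨x, hx, rfl⟩, y, hy, by simp only [dotProduct_add, add_sub_cancel_left]⟩
  · rintro ⟨_, ⟨x, hx, rfl⟩, y, hy, hxy⟩
    exact ⟨x, hx, y, hy, by rw [dotProduct_add]; exact eq_sub_iff_add_eq'.1 hxy⟩

lemma exists_mem_zmultiples_sub_mem_uIcc {g a b : ℝ} (hg : g ≠ 0) (hab : |g| ≤ |b - a|) (c : ℝ) :
    ∃ z ∈ AddSubgroup.zmultiples g, c - z ∈ uIcc a b := by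
  obtain ⟨k, hk, -⟩ := existsUnique_sub_zsmul_mem_Ico (abs_pos.2 hg) c (min a b)
  have habs : |g| ∈ AddSubgroup.zmultiples g := by
    rcases abs_choice g with h | h <;> rw [h]
    · exact AddSubgroup.mem_zmultiples g
    · exact neg_mem (AddSubgroup.mem_zmultiples g)
  have hwidth : max a b - min a b = |b - a| := max_sub_min_eq_abs a b
  exact ⟨k • |g|, zsmul_mem habs k, hk.1, by linarith [hk.2]⟩

lemma exists_dotProduct_lt_of_interior_nonempty (hK : (interior K).Nonempty) {u : Fin n → ℝ}
    (hu : u ≠ 0) : ∃ p ∈ K, ∃ q ∈ K, u ⬝ᵥ p < u ⬝ᵥ q := by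
  obtain ⟨p, hp⟩ := hK
  have hcont : Continuous fun ε : ℝ => p + ε • u := by fun_prop
  have hnear : ∀ᶠ ε in nhds (0 : ℝ), p + ε • u ∈ interior K :=
    hcont.continuousAt.eventually_mem (by simpa using isOpen_interior.mem_nhds hp)
  obtain ⟨ε, hε, hpos⟩ := ((hnear.filter_mono nhdsWithin_le_nhds).and
    self_mem_nhdsWithin).exists (f := nhdsWithin 0 (Ioi 0))
  have huu : 0 < u ⬝ᵥ u := dotProduct_self_star_pos_iff.2 hu
  refine ⟨p, interior_subset hp, _, interior_subset hε, ?_⟩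
  rw [dotProduct_add, dotProduct_smul, smul_eq_mul]
  exact lt_add_of_pos_right _ (mul_pos hpos huu)

/-- It suffices to test the functionals that take integer values on the lattice: the values of any
other functional are dense or form a group `gℤ`, and then `g⁻¹ • u` is one to be tested. -/
lemma nonSeparable_of_forall_integral_functional (hA : A.det ≠ 0) (hK : Convex ℝ K)
    (hint : (interior K).Nonempty)
    (hwidth : ∀ (u : Fin n → ℝ) (m : Fin n → ℤ), m ≠ 0 → (u ᵥ* A = fun i => (m i : ℝ)) →
      ∃ q ∈ halfDiff K, 1 ≤ |u ⬝ᵥ (2 : ℝ) • q|) :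
    NonSeparable (latticeOf A) K := by
  rw [nonSeparable_latticeOf_iff]
  intro u hu c
  have hconn : ((u ⬝ᵥ ·) '' K).OrdConnected :=
    (hK.is_linear_image ⟨dotProduct_add u, fun r x => dotProduct_smul r u x⟩).ordConnected
  rcases (latticeValues A u).dense_or_cyclic with hdense | ⟨g, hg⟩
  · obtain ⟨p, hp, q, hq, hpq⟩ := exists_dotProduct_lt_of_interior_nonempty hint hu
    obtain ⟨z, hz, hqz, hzp⟩ := hdense.exists_between (sub_lt_sub_left hpq c)
    exact ⟨z, hz, hconn.out (mem_image_of_mem _ hp) (mem_image_of_mem _ hq)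
      ⟨by linarith, by linarith⟩⟩
  rw [← AddSubgroup.zmultiples_eq_closure] at hg
  have huA : u ᵥ* A ≠ 0 := fun h => hu <|
    vecMul_injective_iff_isUnit.2 ((isUnit_iff_isUnit_det A).2 hA.isUnit)
      (h.trans (zero_vecMul A).symm)
  have hmul : ∀ i, ∃ k : ℤ, k • g = (u ᵥ* A) i := fun i =>
    AddSubgroup.mem_zmultiples_iff.1 (hg ▸ vecMul_apply_mem_latticeValues A u i)
  choose m hm using hmul
  have hg0 : g ≠ 0 := fun h => huA (funext fun i => by simp [← hm i, h])
  have hm0 : m ≠ 0 := fun h => huA (funext fun i => by simp [← hm i, h])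
  obtain ⟨_, hq, hqu⟩ := hwidth (g⁻¹ • u) m hm0 <| by
    ext i; simp [smul_vecMul, ← hm i, hg0, mul_comm]
  obtain ⟨p, hp, p', hp', rfl⟩ := mem_halfDiff.1 hq
  rw [smul_inv_smul₀ two_ne_zero, smul_dotProduct, dotProduct_sub, smul_eq_mul, abs_mul, abs_inv,
    inv_mul_eq_div, one_le_div (abs_pos.2 hg0)] at hqu
  obtain ⟨z, hz, hcz⟩ := exists_mem_zmultiples_sub_mem_uIcc hg0 hqu c
  exact ⟨z, hg ▸ hz, hconn.uIcc_subset (mem_image_of_mem _ hp') (mem_image_of_mem _ hp) hcz⟩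

lemma dTrans_nonneg (K : Set (Fin n → ℝ)) : 0 ≤ dTrans K :=
  Real.sInf_nonneg (by rintro _ ⟨A, -, -, rfl⟩; positivity)

lemma dTrans_mul_abs_det_le (hA : A.det ≠ 0) (h : NonSeparable (latticeOf A) K) :
    dTrans K * |A.det| ≤ volume.real K := by
  rw [← le_div_iff₀ (abs_pos.2 hA)]
  exact csInf_le ⟨0, by rintro _ ⟨B, -, -, rfl⟩; positivity⟩ ⟨A, hA, h, rfl⟩

end NonSeparable

section Hexagons

variable {K : Set (Fin 2 → ℝ)} {a b c v w : Fin 2 → ℝ}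

/-- The planar cross product. -/
def cross (a b : Fin 2 → ℝ) : ℝ :=
  a 0 * b 1 - a 1 * b 0

/-- The (signed) area of the centrally symmetric hexagon with vertices `a, b, c, -a, -b, -c`. -/
def hexArea (a b c : Fin 2 → ℝ) : ℝ :=
  cross a b + cross b c + cross a c

lemma smul_eq_cross_smul_sub (a b c : Fin 2 → ℝ) :
    cross a b • c = cross a c • b - cross b c • a := by
  ext i
  fin_cases i <;> simp [cross] <;> ring

lemma det_transpose_of_eq_cross (v w : Fin 2 → ℝ) : (of ![v, w])ᵀ.det = cross v w := by
  rw [det_transpose, det_fin_two, cross]; rfl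

lemma dotProduct_mem_uIcc_of_mem_segment {n : ℕ} (u : Fin n → ℝ) {x y z : Fin n → ℝ}
    (hx : x ∈ segment ℝ y z) : u ⬝ᵥ x ∈ uIcc (u ⬝ᵥ y) (u ⬝ᵥ z) := by
  obtain ⟨r, s, hr, hs, hrs, rfl⟩ := hx
  rw [← segment_eq_uIcc]
  exact ⟨r, s, hr, hs, hrs, by simp only [dotProduct_add, dotProduct_smul]⟩

lemma one_le_abs_of_mem_uIcc {p q s : ℝ} (hs : s ∈ uIcc p q)
    (hpq : (1 ≤ p ∧ 1 ≤ q) ∨ (p ≤ -1 ∧ q ≤ -1)) : 1 ≤ |s| := by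
  rcases hpq with ⟨hp, hq⟩ | ⟨hp, hq⟩
  · exact le_abs.2 (Or.inl ((le_inf hp hq).trans hs.1))
  · exact le_abs.2 (Or.inr (le_neg.1 (hs.2.trans (sup_le hp hq))))

lemma dTrans_mul_abs_cross_le_of_mem_segment (hK : Convex ℝ K) (hint : (interior K).Nonempty)
    (ha : a ∈ halfDiff K) (hb : b ∈ halfDiff K) (hc : c ∈ halfDiff K) (hvw : cross v w ≠ 0)
    (hav : (2 : ℝ) • a ∈ segment ℝ v (v + w)) (hbv : (2 : ℝ) • b ∈ segment ℝ (v + w) w)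
    (hcv : (2 : ℝ) • c ∈ segment ℝ w (-v)) :
    dTrans K * |cross v w| ≤ volume.real K := by
  rw [← det_transpose_of_eq_cross] at hvw ⊢
  refine dTrans_mul_abs_det_le hvw (nonSeparable_of_forall_integral_functional hvw hK hint ?_)
  intro u m hm hum
  rw [vecMul_transpose] at hum
  have huv : u ⬝ᵥ v = m 0 := (dotProduct_comm u v).trans (congrFun hum 0)
  have huw : u ⬝ᵥ w = m 1 := (dotProduct_comm u w).trans (congrFun hum 1)
  have hm01 : m 0 ≠ 0 ∨ m 1 ≠ 0 := by
    by_contra! h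
    exact hm (funext (Fin.forall_fin_two.2 h))
  -- one of the sides `[v, v + w]`, `[v + w, w]`, `[w, -v]` is outside the strip `|⟨u, ·⟩| < 1`
  have hsign : ((1 ≤ m 0 ∧ 1 ≤ m 0 + m 1) ∨ (m 0 ≤ -1 ∧ m 0 + m 1 ≤ -1)) ∨
      ((1 ≤ m 0 + m 1 ∧ 1 ≤ m 1) ∨ (m 0 + m 1 ≤ -1 ∧ m 1 ≤ -1)) ∨
      ((1 ≤ m 1 ∧ 1 ≤ -m 0) ∨ (m 1 ≤ -1 ∧ -m 0 ≤ -1)) := by omega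
  have hau := dotProduct_mem_uIcc_of_mem_segment u hav
  have hbu := dotProduct_mem_uIcc_of_mem_segment u hbv
  have hcu := dotProduct_mem_uIcc_of_mem_segment u hcv
  rw [dotProduct_add, huv, huw] at hau hbu
  rw [dotProduct_neg, huv, huw] at hcu
  rcases hsign with h | h | h
  · exact ⟨a, ha, one_le_abs_of_mem_uIcc hau (mod_cast h)⟩
  · exact ⟨b, hb, one_le_abs_of_mem_uIcc hbu (mod_cast h)⟩
  · exact ⟨c, hc, one_le_abs_of_mem_uIcc hcu (mod_cast h)⟩

lemma dTrans_mul_cross_le (hK : Convex ℝ K) (hint : (interior K).Nonempty)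
    (ha : a ∈ halfDiff K) (hb : b ∈ halfDiff K) : 4 * dTrans K * cross a b ≤ volume.real K := by
  have hcross : cross ((2 : ℝ) • a) ((2 : ℝ) • b) = 4 * cross a b := by
    simp only [cross, Pi.smul_apply, smul_eq_mul]; ring
  rcases le_or_gt (cross a b) 0 with hab | hab
  · exact (mul_nonpos_of_nonneg_of_nonpos (mul_nonneg (by norm_num) (dTrans_nonneg K)) hab).trans
      measureReal_nonneg
  · have h := dTrans_mul_abs_cross_le_of_mem_segment hK hint ha hb hb
      (by rw [hcross]; positivity) (left_mem_segment ℝ _ _) (right_mem_segment ℝ _ _)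
      (left_mem_segment ℝ _ _)
    rw [hcross, abs_of_pos (by positivity)] at h
    linarith

lemma mem_segment_of_smul_eq {E : Type*} [AddCommGroup E] [Module ℝ E] {x y p : E} {r s : ℝ}
    (hr : 0 < r) (hs : 0 < s) (h : (r + s) • p = r • x + s • y) : p ∈ segment ℝ x y := by
  have hrs : 0 < r + s := add_pos hr hs
  refine mem_segment_iff_div.2 ⟨r, s, hr.le, hs.le, hrs, ?_⟩
  rw [div_eq_inv_mul, div_eq_inv_mul, mul_smul, mul_smul, ← smul_add, ← h, inv_smul_smul₀ hrs.ne']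

/-- The lattice generated by `v` and `w` below is the one for which the hexagon `±v, ±(v + w), ±w`
has the points `±2a, ±2b, ±2c` on its sides. -/
lemma dTrans_mul_prod_le (hK : Convex ℝ K) (hint : (interior K).Nonempty)
    (ha : a ∈ halfDiff K) (hb : b ∈ halfDiff K) (hc : c ∈ halfDiff K) {x y z : ℝ}
    (hx : 0 < x) (hy : 0 < y) (hz : 0 < z) (hbc : cross b c = y + z) (hac : cross a c = x + z)
    (hab : cross a b = x + y) :
    4 * dTrans K * ((y + z) * (x + z) * (x + y)) ≤ volume.real K * (x * y + y * z + z * x) := by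
  set D := x * y + y * z + z * x with hD
  have hDpos : 0 < D := by positivity
  set v : Fin 2 → ℝ := (2 * (x + z) / D) • ((y + z) • a - z • b) with hv
  set w : Fin 2 → ℝ := (2 * (y + z) / D) • ((x + z) • b - z • a) with hw
  have hcramer : (x + y) • c = (x + z) • b - (y + z) • a := by
    rw [← hbc, ← hac, ← hab, smul_eq_cross_smul_sub]
  have hcross : cross v w = 4 * ((y + z) * (x + z) * (x + y)) / D := by
    rw [← hab]
    simp only [cross, hv, hw, Pi.smul_apply, Pi.sub_apply, smul_eq_mul]
    field_simp
    rw [hD]; ring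
  have h := dTrans_mul_abs_cross_le_of_mem_segment (v := v) (w := w) hK hint ha hb hc
    (by rw [hcross]; positivity) (mem_segment_of_smul_eq hy hz ?_)
    (mem_segment_of_smul_eq hz hx ?_) (mem_segment_of_smul_eq hx hy ?_)
  · rw [hcross, abs_of_pos (by positivity), mul_div_assoc', div_le_iff₀ hDpos] at h
    linarith
  · ext i
    simp only [hv, hw, Pi.smul_apply, Pi.sub_apply, Pi.add_apply, smul_eq_mul]
    field_simp
    rw [hD]; ring
  · ext i
    simp only [hv, hw, Pi.smul_apply, Pi.sub_apply, Pi.add_apply, smul_eq_mul]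
    field_simp
    rw [hD]; ring
  · rw [smul_comm, hcramer]
    ext i
    simp only [hv, hw, Pi.smul_apply, Pi.sub_apply, Pi.add_apply, Pi.neg_apply, smul_eq_mul]
    field_simp
    rw [hD]; ring

lemma dTrans_mul_hexArea_add_le (hK : Convex ℝ K) (hint : (interior K).Nonempty)
    (ha : a ∈ halfDiff K) (hb : b ∈ halfDiff K) (hc : c ∈ halfDiff K) {x y z : ℝ}
    (hx : 0 < x) (hy : 0 < y) (hz : 0 < z) (hbc : cross b c = y + z) (hac : cross a c = x + z)
    (hab : cross a b = x + y) :
    16 * dTrans K * hexArea a b c * (x * y + y * z + z * x) +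
        4 * dTrans K * (x * (y - z) ^ 2 + y * (z - x) ^ 2 + z * (x - y) ^ 2) ≤
      9 * volume.real K * (x * y + y * z + z * x) := by
  have h := dTrans_mul_prod_le hK hint ha hb hc hx hy hz hbc hac hab
  rw [hexArea, hab, hbc, hac]
  linear_combination 9 * h

/-- Ravi's substitution, unless `α, β, γ` violate a triangle inequality, in which case their sum is
at most twice one of them. -/
lemma le_or_exists_eq_add {α β γ d V : ℝ} (hd : 0 ≤ d) (hα : 4 * d * α ≤ V) (hβ : 4 * d * β ≤ V)
    (hγ : 4 * d * γ ≤ V) :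
    16 * d * (γ + α + β) ≤ 8 * V ∨
      ∃ x y z, 0 < x ∧ 0 < y ∧ 0 < z ∧ α = y + z ∧ β = x + z ∧ γ = x + y := by
  by_cases! h : α < β + γ ∧ β < α + γ ∧ γ < α + β
  · exact Or.inr ⟨(β + γ - α) / 2, (α + γ - β) / 2, (α + β - γ) / 2, by linarith, by linarith,
      by linarith, by ring, by ring, by ring⟩
  · left
    rcases le_or_gt (β + γ) α with hle | hlt
    · linarith [mul_le_mul_of_nonneg_left hle hd]
    rcases le_or_gt (α + γ) β with hle | hlt'
    · linarith [mul_le_mul_of_nonneg_left hle hd]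
    · linarith [mul_le_mul_of_nonneg_left (h hlt hlt') hd]

lemma dTrans_mul_hexArea_le_or (hK : Convex ℝ K) (hint : (interior K).Nonempty)
    (ha : a ∈ halfDiff K) (hb : b ∈ halfDiff K) (hc : c ∈ halfDiff K) :
    16 * dTrans K * hexArea a b c ≤ 8 * volume.real K ∨
      ∃ x y z, 0 < x ∧ 0 < y ∧ 0 < z ∧ cross b c = y + z ∧ cross a c = x + z ∧ cross a b = x + y :=
  le_or_exists_eq_add (dTrans_nonneg K) (dTrans_mul_cross_le hK hint hb hc)
    (dTrans_mul_cross_le hK hint ha hc) (dTrans_mul_cross_le hK hint ha hb)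

lemma dTrans_mul_hexArea_le (hK : Convex ℝ K) (hint : (interior K).Nonempty)
    (ha : a ∈ halfDiff K) (hb : b ∈ halfDiff K) (hc : c ∈ halfDiff K) :
    16 * dTrans K * hexArea a b c ≤ 9 * volume.real K := by
  rcases dTrans_mul_hexArea_le_or hK hint ha hb hc with hle | ⟨x, y, z, hx, hy, hz, hbc, hac, hab⟩
  · linarith [measureReal_nonneg (μ := volume) (s := K)]
  · have h := dTrans_mul_hexArea_add_le hK hint ha hb hc hx hy hz hbc hac hab
    have hd := dTrans_nonneg K
    exact le_of_mul_le_mul_right (le_of_add_le_of_nonneg_left h (by positivity)) (by positivity)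

lemma cross_eq_of_dTrans_mul_hexArea_eq (hK : Convex ℝ K) (hint : (interior K).Nonempty)
    (hvol : 0 < volume.real K) (ha : a ∈ halfDiff K) (hb : b ∈ halfDiff K) (hc : c ∈ halfDiff K)
    (heq : 16 * dTrans K * hexArea a b c = 9 * volume.real K) :
    cross a b = cross b c ∧ cross b c = cross a c := by
  rcases dTrans_mul_hexArea_le_or hK hint ha hb hc with hle | ⟨x, y, z, hx, hy, hz, hbc, hac, hab⟩
  · linarith
  have h := dTrans_mul_hexArea_add_le hK hint ha hb hc hx hy hz hbc hac hab
  have hd : 0 < dTrans K := (dTrans_nonneg K).lt_of_ne' fun h0 => by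
    rw [h0, mul_zero, zero_mul] at heq; linarith
  have hsum : x * (y - z) ^ 2 + y * (z - x) ^ 2 + z * (x - y) ^ 2 ≤ 0 := by
    rw [heq] at h
    exact nonpos_of_mul_nonpos_right (by linarith) (mul_pos four_pos hd)
  have hx' : 0 ≤ x * (y - z) ^ 2 := by positivity
  have hy' : 0 ≤ y * (z - x) ^ 2 := by positivity
  have hz' : 0 ≤ z * (x - y) ^ 2 := by positivity
  have hyz : x * (y - z) ^ 2 = 0 := by linarith
  have hxy : z * (x - y) ^ 2 = 0 := by linarith
  have hyz' : y = z := by simpa [hx.ne', sub_eq_zero] using hyz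
  have hxy' : x = y := by simpa [hz.ne', sub_eq_zero] using hxy
  exact ⟨by rw [hab, hbc, hxy', hyz'], by rw [hbc, hac, hxy']⟩

end Hexagons

section HexExtremal

variable {K : Set (Fin 2 → ℝ)} {a b c : Fin 2 → ℝ} {A : Matrix (Fin 2) (Fin 2) ℝ}

lemma cross_mulVec (A : Matrix (Fin 2) (Fin 2) ℝ) (a b : Fin 2 → ℝ) :
    cross (A *ᵥ a) (A *ᵥ b) = A.det * cross a b := by
  simp only [cross, det_fin_two, mulVec, dotProduct, Fin.sum_univ_two]
  ring

lemma hexArea_mulVec (A : Matrix (Fin 2) (Fin 2) ℝ) (a b c : Fin 2 → ℝ) :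
    hexArea (A *ᵥ a) (A *ᵥ b) (A *ᵥ c) = A.det * hexArea a b c := by
  simp only [hexArea, cross_mulVec]
  ring

lemma volume_real_mulVecLin_image {n : ℕ} (A : Matrix (Fin n) (Fin n) ℝ) (K : Set (Fin n → ℝ)) :
    volume.real (A.mulVecLin '' K) = |A.det| * volume.real K := by
  rw [Measure.real, Measure.addHaar_image_linearMap, ← toLin'_apply', LinearMap.det_toLin',
    ENNReal.toReal_mul, ENNReal.toReal_ofReal (abs_nonneg _), Measure.real]

/-- Planar convex bodies `K` in whose half difference body every centrally symmetric hexagon has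
area at most `3√3 / (2π) · |K|`, the area of the regular hexagon inscribed in the unit disc if
`|K| = π`, with equality for affinely regular hexagons only. -/
structure IsHexExtremal (K : Set (Fin 2 → ℝ)) : Prop where
  isCompact : IsCompact K
  convex : Convex ℝ K
  interior_nonempty : (interior K).Nonempty
  pi_mul_hexArea_le : ∀ ⦃a b c⦄, a ∈ halfDiff K → b ∈ halfDiff K → c ∈ halfDiff K →
    Real.pi * hexArea a b c ≤ 3 * √3 / 2 * volume.real K
  cross_eq : ∀ ⦃a b c⦄, a ∈ halfDiff K → b ∈ halfDiff K → c ∈ halfDiff K →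
    Real.pi * hexArea a b c = 3 * √3 / 2 * volume.real K →
      cross a b = cross b c ∧ cross b c = cross a c

lemma volume_real_pos_of_isCompact {n : ℕ} {K : Set (Fin n → ℝ)} (hK : IsCompact K)
    (hint : (interior K).Nonempty) : 0 < volume.real K :=
  ENNReal.toReal_pos (Measure.measure_pos_of_nonempty_interior volume hint).ne' hK.measure_lt_top.ne

lemma isHexExtremal_of_le_dTrans (hK : IsCompact K) (hconv : Convex ℝ K)
    (hint : (interior K).Nonempty) (hd : Real.pi * √3 / 8 ≤ dTrans K) : IsHexExtremal K := by
  have hvol := volume_real_pos_of_isCompact hK hint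
  have hsq : √3 * √3 = 3 := Real.mul_self_sqrt (by norm_num)
  have hd_mul : ∀ {x : ℝ}, 0 < x → 2 * √3 * (Real.pi * x) ≤ 16 * dTrans K * x := fun hx => by
    linarith [mul_le_mul_of_nonneg_right hd hx.le]
  refine ⟨hK, hconv, hint, fun a b c ha hb hc => ?_, fun a b c ha hb hc heq => ?_⟩
  · rcases le_or_gt (hexArea a b c) 0 with hneg | hpos
    · exact (mul_nonpos_of_nonneg_of_nonpos Real.pi_pos.le hneg).trans (by positivity)
    · have h := (hd_mul hpos).trans (dTrans_mul_hexArea_le hconv hint ha hb hc)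
      refine le_of_mul_le_mul_left (h.trans_eq ?_) (show 0 < 2 * √3 by positivity)
      linear_combination -3 * volume.real K * hsq
  · have hpos : 0 < hexArea a b c :=
      pos_of_mul_pos_right (heq ▸ (by positivity : 0 < 3 * √3 / 2 * volume.real K)) Real.pi_pos.le
    refine cross_eq_of_dTrans_mul_hexArea_eq hconv hint hvol ha hb hc
      (le_antisymm (dTrans_mul_hexArea_le hconv hint ha hb hc)
        (le_trans (le_of_eq ?_) (hd_mul hpos)))
    rw [heq]
    linear_combination -3 * volume.real K * hsq

namespace IsHexExtremal

lemma volume_pos (h : IsHexExtremal K) : 0 < volume.real K :=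
  volume_real_pos_of_isCompact h.isCompact h.interior_nonempty

lemma cross_pos (h : IsHexExtremal K) (hab : Real.pi * cross a b = √3 / 2 * volume.real K) :
    0 < cross a b := by
  have hvol := h.volume_pos
  exact pos_of_mul_pos_right (hab ▸ (by positivity : 0 < √3 / 2 * volume.real K)) Real.pi_pos.le

lemma image (h : IsHexExtremal K) (hA : 0 < A.det) : IsHexExtremal (A.mulVecLin '' K) := by
  have hsurj : Function.Surjective A.mulVecLin := mulVec_surjective_iff_isUnit.2 <|
    (isUnit_iff_isUnit_det A).2 hA.ne'.isUnit
  have hopen := LinearMap.isOpenMap_of_finiteDimensional A.mulVecLin hsurj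
  have hcont := A.mulVecLin.continuous_of_finiteDimensional
  have hscale : 3 * √3 / 2 * (A.det * volume.real K) = A.det * (3 * √3 / 2 * volume.real K) :=
    mul_left_comm _ _ _
  refine ⟨h.isCompact.image hcont, h.convex.linear_image _,
    (h.interior_nonempty.image _).mono (hopen.image_interior_subset K), ?_, ?_⟩ <;>
  rw [halfDiff_image, volume_real_mulVecLin_image, abs_of_pos hA, hscale] <;>
  rintro _ _ _ ⟨a, ha, rfl⟩ ⟨b, hb, rfl⟩ ⟨c, hc, rfl⟩ <;>
  simp only [mulVecLin_apply, hexArea_mulVec, cross_mulVec, mul_left_comm Real.pi]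
  · exact mul_le_mul_of_nonneg_left (h.pi_mul_hexArea_le ha hb hc) hA.le
  · intro heq
    obtain ⟨hab, hbc⟩ := h.cross_eq ha hb hc (mul_left_cancel₀ hA.ne' heq)
    exact ⟨congrArg _ hab, congrArg _ hbc⟩

end IsHexExtremal

/-- The hexagon `±a, ±b, ±(b - a)`, whose area is `3 * cross a b`, lies in the half difference
body of `K` and attains the bound of `IsHexExtremal`. -/
structure IsMaxHex (K : Set (Fin 2 → ℝ)) (a b : Fin 2 → ℝ) : Prop where
  left_mem : a ∈ halfDiff K
  right_mem : b ∈ halfDiff K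
  sub_mem : b - a ∈ halfDiff K
  pi_mul_cross : Real.pi * cross a b = √3 / 2 * volume.real K

lemma IsHexExtremal.isMaxHex (h : IsHexExtremal K) (ha : a ∈ halfDiff K) (hb : b ∈ halfDiff K)
    (hc : c ∈ halfDiff K) (heq : Real.pi * hexArea a b c = 3 * √3 / 2 * volume.real K) :
    IsMaxHex K a b := by
  obtain ⟨hab, hbc⟩ := h.cross_eq ha hb hc heq
  have hcross : Real.pi * cross a b = √3 / 2 * volume.real K := by
    rw [hexArea, ← hbc, ← hab] at heq
    linarith
  have hsub : c = b - a := by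
    have hcramer := smul_eq_cross_smul_sub a b c
    rw [← hbc, ← hab, ← smul_sub] at hcramer
    exact smul_right_injective _ (h.cross_pos hcross).ne' hcramer
  exact ⟨ha, hb, hsub ▸ hc, hcross⟩

namespace IsMaxHex

variable {a' b' p : Fin 2 → ℝ}

lemma rotate (hm : IsMaxHex K a b) : IsMaxHex K b (b - a) where
  left_mem := hm.right_mem
  right_mem := hm.sub_mem
  sub_mem := by simpa using neg_mem_halfDiff hm.left_mem
  pi_mul_cross := by
    rw [← hm.pi_mul_cross]
    simp only [cross, Pi.sub_apply]
    ring

lemma image (hm : IsMaxHex K a b) (hA : 0 < A.det) :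
    IsMaxHex (A.mulVecLin '' K) (A *ᵥ a) (A *ᵥ b) where
  left_mem := halfDiff_image A.mulVecLin K ▸ mem_image_of_mem _ hm.left_mem
  right_mem := halfDiff_image A.mulVecLin K ▸ mem_image_of_mem _ hm.right_mem
  sub_mem := by
    rw [← mulVec_sub, halfDiff_image]
    exact mem_image_of_mem _ hm.sub_mem
  pi_mul_cross := by
    rw [cross_mulVec, volume_real_mulVecLin_image, abs_of_pos hA]
    linear_combination A.det * hm.pi_mul_cross

lemma cross_pos (hm : IsMaxHex K a b) (h : IsHexExtremal K) : 0 < cross a b :=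
  h.cross_pos hm.pi_mul_cross

lemma cross_eq_cross (hm : IsMaxHex K a b) (hm' : IsMaxHex K a' b') : cross a b = cross a' b' :=
  mul_left_cancel₀ Real.pi_ne_zero (hm.pi_mul_cross.trans hm'.pi_mul_cross.symm)

lemma hexArea_le (hm : IsMaxHex K a b) (h : IsHexExtremal K) {p q r : Fin 2 → ℝ}
    (hp : p ∈ halfDiff K) (hq : q ∈ halfDiff K) (hr : r ∈ halfDiff K) :
    hexArea p q r ≤ 3 * cross a b := by
  refine le_of_mul_le_mul_left ((h.pi_mul_hexArea_le hp hq hr).trans_eq ?_) Real.pi_pos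
  linear_combination -3 * hm.pi_mul_cross

lemma cross_le_left (hm : IsMaxHex K a b) (h : IsHexExtremal K) (hp : p ∈ halfDiff K) :
    2 * cross p b - cross p a ≤ 2 * cross a b := by
  have := hm.hexArea_le h hp hm.right_mem hm.sub_mem
  simp only [hexArea, cross, Pi.sub_apply] at this ⊢
  linarith

lemma cross_le_right (hm : IsMaxHex K a b) (h : IsHexExtremal K) (hp : p ∈ halfDiff K) :
    2 * cross a p - cross b p ≤ 2 * cross a b := by
  have := hm.hexArea_le h hm.left_mem hp hm.sub_mem
  simp only [hexArea, cross, Pi.sub_apply] at this ⊢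
  linarith

lemma right_unique (hm : IsMaxHex K a b) (hm' : IsMaxHex K a b') (h : IsHexExtremal K) :
    b = b' := by
  have hab : cross a b = cross a b' := hm.cross_eq_cross hm'
  have hswap : cross b b' = -cross b' b := by simp only [cross]; ring
  have hbb' : cross b b' = 0 := by
    linarith [hm.cross_le_right h hm'.right_mem, hm'.cross_le_right h hm.right_mem]
  have hcramer := smul_eq_cross_smul_sub a b b'
  rw [hbb', zero_smul, sub_zero, ← hab] at hcramer
  exact (smul_right_injective _ (hm.cross_pos h).ne' hcramer).symm

end IsMaxHex

end HexExtremal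

section Slices

variable {K : Set (Fin 2 → ℝ)} {x : ℝ}

/-- The intersection of `K` with the vertical line through `(x, 0)`, as a set of reals. -/
def slice (K : Set (Fin 2 → ℝ)) (x : ℝ) : Set ℝ :=
  {y | ![x, y] ∈ K}

lemma slice_nonempty_iff : (slice K x).Nonempty ↔ x ∈ Function.eval 0 '' K := by
  constructor
  · rintro ⟨y, hy⟩
    exact ⟨_, hy, rfl⟩
  · rintro ⟨p, hp, rfl⟩
    have hp_eq : ![p 0, p 1] = p := by ext i; fin_cases i <;> rfl
    exact ⟨p 1, by rwa [slice, mem_ofPred_eq, Function.eval, hp_eq]⟩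

lemma isCompact_slice (hK : IsCompact K) (x : ℝ) : IsCompact (slice K x) :=
  (hK.image (continuous_apply 1)).of_isClosed_subset (hK.isClosed.preimage (by fun_prop))
    fun _ hy => ⟨_, hy, rfl⟩

lemma convex_slice (hK : Convex ℝ K) (x : ℝ) : Convex ℝ (slice K x) := by
  intro y hy z hz r s hr hs hrs
  have h := hK hy hz hr hs hrs
  rwa [smul_vec2, smul_vec2, vec2_add, Convex.combo_self hrs] at h

lemma exists_volume_real_slice_eq_sub (hK : IsCompact K) (hconv : Convex ℝ K)
    (hx : x ∈ Function.eval 0 '' K) :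
    ∃ y ∈ slice K x, ∃ z ∈ slice K x, volume.real (slice K x) = z - y := by
  have hne : (slice K x).Nonempty := slice_nonempty_iff.2 hx
  have hcompact := isCompact_slice hK x
  have hIcc := eq_Icc_of_connected_compact ⟨hne, (convex_slice hconv x).isPreconnected⟩ hcompact
  have hle : sInf (slice K x) ≤ sSup (slice K x) :=
    csInf_le_csSup hne hcompact.bddBelow hcompact.bddAbove
  refine ⟨_, hcompact.sInf_mem hne, _, hcompact.sSup_mem hne, ?_⟩
  conv_lhs => rw [hIcc]
  rw [Real.volume_real_Icc_of_le hle]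

lemma lintegral_volume_slice (hK : MeasurableSet K) : ∫⁻ x, volume (slice K x) = volume K := by
  have hpres := (volume_preserving_finTwoArrow ℝ).symm
  rw [← hpres.measure_preimage hK.nullMeasurableSet, Measure.volume_eq_prod,
    Measure.prod_apply (hpres.measurable hK)]
  rfl

lemma measurable_volume_slice (hK : MeasurableSet K) : Measurable fun x => volume (slice K x) :=
  measurable_measure_prodMk_left ((volume_preserving_finTwoArrow ℝ).symm.measurable hK)

lemma integrable_volume_real_slice (hK : MeasurableSet K) (hvol : volume K ≠ ⊤) :
    Integrable fun x => volume.real (slice K x) :=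
  integrable_toReal_of_lintegral_ne_top (measurable_volume_slice hK).aemeasurable
    (by rwa [lintegral_volume_slice hK])

lemma integral_volume_real_slice (hK : MeasurableSet K) (hvol : volume K ≠ ⊤) :
    ∫ x, volume.real (slice K x) = volume.real K := by
  have hmeas := measurable_volume_slice hK
  simp only [Measure.real]
  rw [integral_toReal hmeas.aemeasurable
    (ae_lt_top hmeas (by rwa [lintegral_volume_slice hK])), lintegral_volume_slice hK]

lemma exists_eval_image_eq_Icc {n : ℕ} {K : Set (Fin n → ℝ)} (hK : IsCompact K)
    (hconv : Convex ℝ K) (hint : (interior K).Nonempty) (i : Fin n) :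
    ∃ m w : ℝ, 0 < w ∧ Function.eval i '' K = Icc (m - w) (m + w) := by
  set I := Function.eval i '' K
  have hconn : IsConnected I :=
    ⟨(hint.mono interior_subset).image _, (hconv.is_linear_image
      ⟨fun _ _ => rfl, fun _ _ => rfl⟩).isPreconnected⟩
  have hIcc := eq_Icc_of_connected_compact hconn (hK.image (continuous_apply i))
  have hIint : (interior I).Nonempty :=
    (hint.image _).mono ((isOpenMap_eval i).image_interior_subset K)
  have hlt : sInf I < sSup I := by
    rw [hIcc, interior_Icc] at hIint
    exact nonempty_Ioo.1 hIint
  refine ⟨(sInf I + sSup I) / 2, (sSup I - sInf I) / 2, by linarith, ?_⟩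
  exact hIcc.trans (by congr 1 <;> ring)

end Slices

section CosineSubstitution

variable {f : ℝ → ℝ} {m w : ℝ}

/-- The density of `f x dx` in the parameter `t` of the substitution `x = m + w cos t`, up to the
factor `w`. -/
def cosDensity (f : ℝ → ℝ) (m w t : ℝ) : ℝ :=
  f (m + w * Real.cos t) * |Real.sin t|

lemma cosDensity_periodic (f : ℝ → ℝ) (m w : ℝ) :
    Function.Periodic (cosDensity f m w) (2 * Real.pi) := fun t => by
  simp only [cosDensity, Real.cos_add_two_pi, Real.sin_add_two_pi]

lemma cosDensity_neg (f : ℝ → ℝ) (m w t : ℝ) : cosDensity f m w (-t) = cosDensity f m w t := by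
  simp only [cosDensity, Real.cos_neg, Real.sin_neg, abs_neg]

lemma add_mul_cos_image_Icc (m : ℝ) (hw : 0 < w) :
    (fun t => m + w * Real.cos t) '' Icc 0 Real.pi = Icc (m - w) (m + w) := by
  rw [show (fun t => m + w * Real.cos t) = (fun x => w * x + m) ∘ Real.cos by ext; simp [add_comm],
    image_comp, Real.bijOn_cos.image_eq, image_affine_Icc' hw]
  congr 1 <;> ring

lemma injOn_add_mul_cos (m : ℝ) (hw : w ≠ 0) :
    InjOn (fun t => m + w * Real.cos t) (Icc 0 Real.pi) := fun _ hs _ ht hst =>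
  Real.injOn_cos hs ht (mul_left_cancel₀ hw (add_left_cancel hst))

lemma hasDerivWithinAt_add_mul_cos (m w t : ℝ) (s : Set ℝ) :
    HasDerivWithinAt (fun t => m + w * Real.cos t) (w * -Real.sin t) s t :=
  (((Real.hasDerivAt_cos t).const_mul w).const_add m).hasDerivWithinAt

lemma abs_deriv_smul_eq_mul_cosDensity (f : ℝ → ℝ) (m t : ℝ) (hw : 0 < w) :
    |w * -Real.sin t| • f (m + w * Real.cos t) = w * cosDensity f m w t := by
  rw [cosDensity, abs_mul, abs_neg, abs_of_pos hw, smul_eq_mul]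
  ring

lemma intervalIntegrable_cosDensity_zero_pi (hw : 0 < w)
    (hf : IntegrableOn f (Icc (m - w) (m + w))) :
    IntervalIntegrable (cosDensity f m w) volume 0 Real.pi := by
  rw [← add_mul_cos_image_Icc m hw, integrableOn_image_iff_integrableOn_abs_deriv_smul
    measurableSet_Icc (fun t _ => hasDerivWithinAt_add_mul_cos m w t _)
    (injOn_add_mul_cos m hw.ne')] at hf
  simp only [abs_deriv_smul_eq_mul_cosDensity f m _ hw] at hf
  rw [intervalIntegrable_iff_integrableOn_Icc_of_le Real.pi_pos.le]
  exact (integrable_const_mul_iff hw.ne'.isUnit _).1 hf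

lemma integral_cosDensity_zero_pi (f : ℝ → ℝ) (m : ℝ) (hw : 0 < w) :
    ∫ t in (0)..Real.pi, cosDensity f m w t = w⁻¹ * ∫ x in Icc (m - w) (m + w), f x := by
  rw [← add_mul_cos_image_Icc m hw, integral_image_eq_integral_abs_deriv_smul
    measurableSet_Icc (fun t _ => hasDerivWithinAt_add_mul_cos m w t _)
    (injOn_add_mul_cos m hw.ne')]
  simp only [abs_deriv_smul_eq_mul_cosDensity f m _ hw]
  rw [integral_const_mul, inv_mul_cancel_left₀ hw.ne', integral_Icc_eq_integral_Ioc,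
    intervalIntegral.integral_of_le Real.pi_pos.le]

lemma intervalIntegrable_cosDensity_neg_pi_zero (hw : 0 < w)
    (hf : IntegrableOn f (Icc (m - w) (m + w))) :
    IntervalIntegrable (cosDensity f m w) volume (-Real.pi) 0 := by
  rw [IntervalIntegrable.iff_comp_neg]
  simp only [cosDensity_neg, neg_neg, neg_zero]
  exact (intervalIntegrable_cosDensity_zero_pi hw hf).symm

lemma intervalIntegrable_cosDensity (hw : 0 < w) (hf : IntegrableOn f (Icc (m - w) (m + w)))
    (s t : ℝ) : IntervalIntegrable (cosDensity f m w) volume s t := by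
  refine (cosDensity_periodic f m w).intervalIntegrable Real.two_pi_pos.ne' (t := -Real.pi) ?_ s t
  rw [show -Real.pi + 2 * Real.pi = Real.pi by ring]
  exact (intervalIntegrable_cosDensity_neg_pi_zero hw hf).trans
    (intervalIntegrable_cosDensity_zero_pi hw hf)

lemma integral_cosDensity_period (hw : 0 < w) (hf : IntegrableOn f (Icc (m - w) (m + w)))
    (s : ℝ) :
    ∫ t in s..s + 2 * Real.pi, cosDensity f m w t =
      2 * w⁻¹ * ∫ x in Icc (m - w) (m + w), f x := by
  have heven :
      ∫ t in -Real.pi..0, cosDensity f m w t = ∫ t in (0)..Real.pi, cosDensity f m w t := by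
    rw [← neg_zero, ← intervalIntegral.integral_comp_neg, neg_zero]
    simp only [cosDensity_neg]
  rw [(cosDensity_periodic f m w).intervalIntegral_add_eq s (-Real.pi),
    show -Real.pi + 2 * Real.pi = Real.pi by ring,
    ← intervalIntegral.integral_add_adjacent_intervals
      (intervalIntegrable_cosDensity_neg_pi_zero hw hf)
      (intervalIntegrable_cosDensity_zero_pi hw hf),
    heven, integral_cosDensity_zero_pi f m hw]
  ring

end CosineSubstitution

lemma Icc_subset_of_integral_eq {f : ℝ → ℝ} {C s t : ℝ} {F : Set ℝ} (hst : s < t)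
    (hf : IntervalIntegrable f volume s t) (hle : ∀ x, f x ≤ C)
    (hint : ∫ x in s..t, f x = (t - s) * C) (hF : IsClosed F) (hCF : ∀ x, f x = C → x ∈ F) :
    Icc s t ⊆ F := by
  have hae : f =ᵐ[volume.restrict (Ioc s t)] fun _ => C := by
    rw [← integral_eq_iff_of_ae_le hf.1 (integrable_const C) (.of_forall hle),
      ← intervalIntegral.integral_of_le hst.le, hint]
    simp [hst.le]
  have hempty : Ioo s t \ F = ∅ := by
    refine (isOpen_Ioo.sdiff hF).eq_empty_of_measure_zero (μ := volume) ?_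
    refine measure_mono_null ?_ ((ae_restrict_iff' measurableSet_Ioc).1 hae)
    exact fun x hx hxC => hx.2 (hCF x (hxC (Ioo_subset_Ioc_self hx.1)))
  rw [← closure_Ioo hst.ne]
  exact closure_minimal (sdiff_eq_empty.1 hempty) hF

lemma isClosed_exists_mem_of_isCompact {X Y : Type*} [TopologicalSpace X] [TopologicalSpace Y]
    {C : Set Y} (hC : IsCompact C) {R : Set (X × Y)} (hR : IsClosed R) :
    IsClosed {x | ∃ y ∈ C, (x, y) ∈ R} := by
  have : CompactSpace C := isCompact_iff_compactSpace.1 hC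
  have hclosed : IsClosed {z : X × C | (z.1, (z.2 : Y)) ∈ R} := hR.preimage (by fun_prop)
  convert isClosedMap_fst_of_compactSpace _ hclosed using 1
  ext x
  simp

lemma intervalIntegrable_sum_add {f : ℝ → ℝ} (hint : ∀ s t, IntervalIntegrable f volume s t)
    (n : ℕ) (c : ℕ → ℝ) (s t : ℝ) :
    IntervalIntegrable (fun x => ∑ k ∈ Finset.range n, f (x + c k)) volume s t := by
  have hsum := IntervalIntegrable.sum (Finset.range n) fun k _ =>
    (IntervalIntegrable.comp_add_right_iff (c := c k)).2 (hint (s + c k) (t + c k))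
  exact hsum.congr fun x _ => Finset.sum_apply x _ _

lemma integral_sum_add_period {f : ℝ → ℝ} {T : ℝ} (hf : Function.Periodic f T)
    (hint : ∀ s t, IntervalIntegrable f volume s t) (n : ℕ) (c : ℕ → ℝ) (s : ℝ) :
    ∫ x in s..s + T, ∑ k ∈ Finset.range n, f (x + c k) = n * ∫ x in s..s + T, f x := by
  rw [intervalIntegral.integral_finsetSum fun k _ =>
    (IntervalIntegrable.comp_add_right_iff (c := c k)).2 (hint (s + c k) (s + T + c k))]
  simp only [intervalIntegral.integral_comp_add_right, add_right_comm s T,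
    hf.intervalIntegral_add_eq _ s, Finset.sum_const, Finset.card_range, nsmul_eq_mul]

section HalfChords

variable {K : Set (Fin 2 → ℝ)} {m w t : ℝ} {q : Fin 2 → ℝ}

/-- Half the chords of `K` from the vertical line at `m - w cos t` to the one at `m + w cos t`. -/
def halfChords (K : Set (Fin 2 → ℝ)) (m w t : ℝ) : Set (Fin 2 → ℝ) :=
  {q | ∃ p ∈ K, ∃ p' ∈ K, p 0 = m + w * Real.cos t ∧ p' 0 = m - w * Real.cos t ∧
    (2⁻¹ : ℝ) • (p - p') = q}

lemma halfChords_subset_halfDiff : halfChords K m w t ⊆ halfDiff K := by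
  rintro _ ⟨p, hp, p', hp', -, -, rfl⟩
  exact smul_sub_mem_halfDiff hp hp'

lemma apply_zero_of_mem_halfChords (hq : q ∈ halfChords K m w t) : q 0 = w * Real.cos t := by
  obtain ⟨p, -, p', -, hp0, hp'0, rfl⟩ := hq
  rw [Pi.smul_apply, Pi.sub_apply, hp0, hp'0, smul_eq_mul]
  ring

/-- The density of the area of `K` in the parameter `t` of the substitution `x = m + w cos t`, up
to the factor `w`. -/
def areaDensity (K : Set (Fin 2 → ℝ)) (m w : ℝ) : ℝ → ℝ :=
  cosDensity (fun x => volume.real (slice K x)) m w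

lemma intervalIntegrable_areaDensity (hK : IsCompact K) (m : ℝ) (hw : 0 < w) (s t : ℝ) :
    IntervalIntegrable (areaDensity K m w) volume s t :=
  intervalIntegrable_cosDensity hw
    (integrable_volume_real_slice hK.measurableSet hK.measure_ne_top).integrableOn s t

lemma integral_areaDensity_period (hK : IsCompact K) (hw : 0 < w)
    (hrange : Function.eval 0 '' K = Icc (m - w) (m + w)) (s : ℝ) :
    ∫ t in s..s + 2 * Real.pi, areaDensity K m w t = 2 * w⁻¹ * volume.real K := by
  have hint := integrable_volume_real_slice hK.measurableSet hK.measure_ne_top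
  have hzero : ∀ x ∉ Icc (m - w) (m + w), volume.real (slice K x) = 0 := fun x hx => by
    rw [← hrange, ← slice_nonempty_iff, not_nonempty_iff_eq_empty] at hx
    rw [hx, measureReal_empty]
  rw [areaDensity, integral_cosDensity_period hw hint.integrableOn,
    setIntegral_eq_integral_of_forall_compl_eq_zero hzero,
    integral_volume_real_slice hK.measurableSet hK.measure_ne_top]

lemma exists_sub_mul_sin_eq_areaDensity (hK : IsCompact K) (hconv : Convex ℝ K)
    (hx : m + w * Real.cos t ∈ Function.eval 0 '' K) :
    ∃ p ∈ K, ∃ p' ∈ K, p 0 = m + w * Real.cos t ∧ p' 0 = m + w * Real.cos t ∧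
      (p 1 - p' 1) * Real.sin t = areaDensity K m w t := by
  obtain ⟨y, hy, z, hz, hlen⟩ := exists_volume_real_slice_eq_sub hK hconv hx
  rw [areaDensity, cosDensity, hlen]
  rcases le_total 0 (Real.sin t) with hsin | hsin
  · exact ⟨_, hz, _, hy, rfl, rfl, by simp [abs_of_nonneg hsin]⟩
  · exact ⟨_, hy, _, hz, rfl, rfl, by simp [abs_of_nonpos hsin]; ring⟩

lemma exists_halfChords_sub_mul_sin_eq (hK : IsCompact K) (hconv : Convex ℝ K)
    (hx : ∀ t, m + w * Real.cos t ∈ Function.eval 0 '' K) (t : ℝ) :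
    ∃ q ∈ halfChords K m w t, ∃ q' ∈ halfChords K m w t,
      2 * ((q 1 - q' 1) * Real.sin t) = areaDensity K m w t + areaDensity K m w (t + Real.pi) := by
  obtain ⟨p, hp, p', hp', hp0, hp'0, hpp'⟩ := exists_sub_mul_sin_eq_areaDensity hK hconv (hx t)
  obtain ⟨r, hr, r', hr', hr0, hr'0, hrr'⟩ :=
    exists_sub_mul_sin_eq_areaDensity hK hconv (hx (t + Real.pi))
  rw [Real.cos_add_pi, mul_neg, ← sub_eq_add_neg] at hr0 hr'0
  refine ⟨_, ⟨p, hp, r, hr, hp0, hr0, rfl⟩, _, ⟨p', hp', r', hr', hp'0, hr'0, rfl⟩, ?_⟩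
  rw [← hpp', ← hrr', Real.sin_add_pi]
  simp only [Pi.smul_apply, Pi.sub_apply, smul_eq_mul]
  ring

end HalfChords

section MaxHexExistence

variable {K : Set (Fin 2 → ℝ)} {a b c : Fin 2 → ℝ} {m w t : ℝ}

lemma cos_add_pi_div_three (t : ℝ) :
    Real.cos (t + Real.pi / 3) = Real.cos t / 2 - √3 / 2 * Real.sin t := by
  rw [Real.cos_add, Real.cos_pi_div_three, Real.sin_pi_div_three]
  ring

lemma sin_add_pi_div_three (t : ℝ) :
    Real.sin (t + Real.pi / 3) = Real.sin t / 2 + √3 / 2 * Real.cos t := by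
  rw [Real.sin_add, Real.cos_pi_div_three, Real.sin_pi_div_three]
  ring

lemma hexArea_swap (a b c : Fin 2 → ℝ) : hexArea c b a = -hexArea a b c := by
  simp only [hexArea, cross]
  ring

/-- The sum of `areaDensity` over the six angles of a regular hexagon. -/
def hexDensity (K : Set (Fin 2 → ℝ)) (m w t : ℝ) : ℝ :=
  ∑ k ∈ Finset.range 6, areaDensity K m w (t + k * (Real.pi / 3))

lemma hexArea_eq_of_apply_zero (ha : a 0 = w * Real.cos t)
    (hb : b 0 = w * Real.cos (t + Real.pi / 3))
    (hc : c 0 = w * Real.cos (t + Real.pi / 3 + Real.pi / 3)) :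
    hexArea a b c = √3 * w * (a 1 * Real.sin t + b 1 * Real.sin (t + Real.pi / 3) +
      c 1 * Real.sin (t + Real.pi / 3 + Real.pi / 3)) := by
  have hsq : √3 * √3 = 3 := Real.mul_self_sqrt (by norm_num)
  simp only [hexArea, cross, ha, hb, hc, cos_add_pi_div_three, sin_add_pi_div_three]
  linear_combination
    w / 4 * (Real.cos t * (a 1 - b 1 - 2 * c 1) + √3 * Real.sin t * c 1) * hsq

lemma exists_hexArea_sub_eq_hexDensity (hK : IsCompact K) (hconv : Convex ℝ K)
    (hx : ∀ t, m + w * Real.cos t ∈ Function.eval 0 '' K) (t : ℝ) :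
    ∃ a ∈ halfChords K m w t, ∃ b ∈ halfChords K m w (t + Real.pi / 3), ∃ c ∈ halfDiff K,
      ∃ a' ∈ halfDiff K, ∃ b' ∈ halfDiff K, ∃ c' ∈ halfDiff K,
        2 * (hexArea a b c - hexArea a' b' c') = √3 * w * hexDensity K m w t := by
  have hchords := exists_halfChords_sub_mul_sin_eq hK hconv hx
  obtain ⟨a, ha, a', ha', haa'⟩ := hchords t
  obtain ⟨b, hb, b', hb', hbb'⟩ := hchords (t + Real.pi / 3)
  obtain ⟨c, hc, c', hc', hcc'⟩ := hchords (t + Real.pi / 3 + Real.pi / 3)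
  refine ⟨a, ha, b, hb, c, halfChords_subset_halfDiff hc, a', halfChords_subset_halfDiff ha', b',
    halfChords_subset_halfDiff hb', c', halfChords_subset_halfDiff hc', ?_⟩
  have hdensity : hexDensity K m w t = 2 * ((a 1 - a' 1) * Real.sin t) +
      2 * ((b 1 - b' 1) * Real.sin (t + Real.pi / 3)) +
      2 * ((c 1 - c' 1) * Real.sin (t + Real.pi / 3 + Real.pi / 3)) := by
    rw [haa', hbb', hcc']
    simp only [hexDensity, Finset.sum_range_succ, Finset.sum_range_zero]
    push_cast
    ring_nf
  rw [hdensity, hexArea_eq_of_apply_zero (apply_zero_of_mem_halfChords ha)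
    (apply_zero_of_mem_halfChords hb) (apply_zero_of_mem_halfChords hc),
    hexArea_eq_of_apply_zero (apply_zero_of_mem_halfChords ha')
    (apply_zero_of_mem_halfChords hb') (apply_zero_of_mem_halfChords hc')]
  ring

lemma add_mul_cos_mem_Icc (m : ℝ) (hw : 0 ≤ w) (t : ℝ) :
    m + w * Real.cos t ∈ Icc (m - w) (m + w) :=
  ⟨by nlinarith [Real.neg_one_le_cos t], by nlinarith [Real.cos_le_one t]⟩

namespace IsHexExtremal

lemma hexDensity_le (h : IsHexExtremal K) (hw : 0 < w)
    (hrange : Function.eval 0 '' K = Icc (m - w) (m + w)) (t : ℝ) :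
    hexDensity K m w t ≤ 6 * volume.real K / (Real.pi * w) := by
  obtain ⟨a, ha, b, hb, c, hc, a', ha', b', hb', c', hc', heq⟩ :=
    exists_hexArea_sub_eq_hexDensity h.isCompact h.convex
      (fun t => hrange ▸ add_mul_cos_mem_Icc m hw.le t) t
  have hle := h.pi_mul_hexArea_le (halfChords_subset_halfDiff ha) (halfChords_subset_halfDiff hb) hc
  have hle' := h.pi_mul_hexArea_le hc' hb' ha'
  rw [hexArea_swap] at hle'
  rw [le_div_iff₀ (by positivity)]
  refine le_of_mul_le_mul_left ?_ (show 0 < √3 by positivity)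
  linear_combination 2 * hle + 2 * hle' - Real.pi * heq

lemma exists_isMaxHex_of_hexDensity_eq (h : IsHexExtremal K) (hw : 0 < w)
    (hrange : Function.eval 0 '' K = Icc (m - w) (m + w))
    (ht : hexDensity K m w t = 6 * volume.real K / (Real.pi * w)) :
    ∃ a ∈ halfChords K m w t, ∃ b ∈ halfChords K m w (t + Real.pi / 3), IsMaxHex K a b := by
  obtain ⟨a, ha, b, hb, c, hc, a', ha', b', hb', c', hc', heq⟩ :=
    exists_hexArea_sub_eq_hexDensity h.isCompact h.convex
      (fun t => hrange ▸ add_mul_cos_mem_Icc m hw.le t) t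
  have ha_mem := halfChords_subset_halfDiff ha
  have hb_mem := halfChords_subset_halfDiff hb
  have hle' := h.pi_mul_hexArea_le hc' hb' ha'
  rw [hexArea_swap] at hle'
  rw [eq_div_iff (by positivity)] at ht
  refine ⟨a, ha, b, hb, h.isMaxHex ha_mem hb_mem hc
    (le_antisymm (h.pi_mul_hexArea_le ha_mem hb_mem hc) ?_)⟩
  linear_combination hle' - Real.pi / 2 * heq - √3 / 2 * ht

end IsHexExtremal

lemma intervalIntegrable_hexDensity (hK : IsCompact K) (m : ℝ) (hw : 0 < w) (s t : ℝ) :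
    IntervalIntegrable (hexDensity K m w) volume s t :=
  intervalIntegrable_sum_add (intervalIntegrable_areaDensity hK m hw) 6 _ s t

lemma integral_hexDensity (hK : IsCompact K) (hw : 0 < w)
    (hrange : Function.eval 0 '' K = Icc (m - w) (m + w)) (s : ℝ) :
    ∫ t in s..s + 2 * Real.pi, hexDensity K m w t = 12 * volume.real K / w := by
  simp only [hexDensity]
  rw [integral_sum_add_period (f := areaDensity K m w) (cosDensity_periodic _ m w)
    (intervalIntegrable_areaDensity hK m hw) 6 (fun k => k * (Real.pi / 3)),
    integral_areaDensity_period hK hw hrange]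
  push_cast
  ring

lemma isClosed_isMaxHex (hK : IsCompact K) :
    IsClosed {q : (Fin 2 → ℝ) × (Fin 2 → ℝ) | IsMaxHex K q.1 q.2} := by
  have hM : IsClosed (halfDiff K) := (isCompact_halfDiff hK).isClosed
  have hcross : IsClosed {q : (Fin 2 → ℝ) × (Fin 2 → ℝ) |
      Real.pi * cross q.1 q.2 = √3 / 2 * volume.real K} :=
    isClosed_eq (by unfold cross; fun_prop) continuous_const
  convert (hM.preimage continuous_fst).inter <| (hM.preimage continuous_snd).inter <|
    (hM.preimage (continuous_snd.sub continuous_fst)).inter hcross using 1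
  ext q
  exact ⟨fun hq => ⟨hq.1, hq.2, hq.3, hq.4⟩, fun hq => ⟨hq.1, hq.2.1, hq.2.2.1, hq.2.2.2⟩⟩

lemma isClosed_mem_halfChords (hK : IsCompact K) (m w : ℝ) :
    IsClosed {x : ℝ × (Fin 2 → ℝ) | x.2 ∈ halfChords K m w x.1} := by
  have hclosed : IsClosed {x : (ℝ × (Fin 2 → ℝ)) × ((Fin 2 → ℝ) × (Fin 2 → ℝ)) |
      x.2.1 0 = m + w * Real.cos x.1.1 ∧ x.2.2 0 = m - w * Real.cos x.1.1 ∧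
        (2⁻¹ : ℝ) • (x.2.1 - x.2.2) = x.1.2} :=
    (isClosed_eq (by fun_prop) (by fun_prop)).inter <|
      (isClosed_eq (by fun_prop) (by fun_prop)).inter (isClosed_eq (by fun_prop) (by fun_prop))
  convert isClosed_exists_mem_of_isCompact (hK.prod hK) hclosed using 1
  ext x
  simp [halfChords, and_assoc]

lemma isClosed_exists_isMaxHex (hK : IsCompact K) (m w : ℝ) :
    IsClosed {t | ∃ a ∈ halfChords K m w t, ∃ b ∈ halfChords K m w (t + Real.pi / 3),
      IsMaxHex K a b} := by
  have hM := isCompact_halfDiff hK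
  have hleft : Continuous fun x : ℝ × ((Fin 2 → ℝ) × (Fin 2 → ℝ)) => (x.1, x.2.1) := by fun_prop
  have hright : Continuous fun x : ℝ × ((Fin 2 → ℝ) × (Fin 2 → ℝ)) =>
    (x.1 + Real.pi / 3, x.2.2) := by fun_prop
  have hchords := isClosed_mem_halfChords hK m w
  have hclosed := (hchords.preimage hleft).inter <| (hchords.preimage hright).inter <|
    (isClosed_isMaxHex hK).preimage continuous_snd
  convert isClosed_exists_mem_of_isCompact (hM.prod hM) hclosed using 1
  ext t
  constructor
  · rintro ⟨a, ha, b, hb, hab⟩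
    exact ⟨(a, b), ⟨hab.left_mem, hab.right_mem⟩, ha, hb, hab⟩
  · rintro ⟨⟨a, b⟩, -, ha, hb, hab⟩
    exact ⟨a, ha, b, hb, hab⟩

/-- The hexagon bound is an equality on average over `t`. -/
lemma IsHexExtremal.exists_isMaxHex (h : IsHexExtremal K) (hw : 0 < w)
    (hrange : Function.eval 0 '' K = Icc (m - w) (m + w)) (t : ℝ) :
    ∃ a ∈ halfChords K m w t, ∃ b ∈ halfChords K m w (t + Real.pi / 3), IsMaxHex K a b := by
  have hpi := Real.two_pi_pos
  refine Icc_subset_of_integral_eq (lt_add_of_pos_right t hpi)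
    (intervalIntegrable_hexDensity h.isCompact m hw _ _) (h.hexDensity_le hw hrange) ?_
    (isClosed_exists_isMaxHex h.isCompact m w)
    (fun s => h.exists_isMaxHex_of_hexDensity_eq hw hrange)
    (left_mem_Icc.2 (lt_add_of_pos_right t hpi).le)
  rw [integral_hexDensity h.isCompact hw hrange]
  field_simp
  ring

end MaxHexExistence

lemma exists_cos_eq_of_abs_lt_one {x d : ℝ} (hx : |x| < 1) (hd : d ≠ 0) :
    ∃ t, Real.cos t = x ∧ Real.sin t * d < 0 := by
  obtain ⟨hx_gt, hx_lt⟩ := abs_lt.1 hx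
  have hcos := Real.cos_arccos hx_gt.le hx_lt.le
  have hsin : 0 < Real.sin (Real.arccos x) := by
    rw [Real.sin_arccos]
    exact Real.sqrt_pos.2 (by nlinarith)
  rcases hd.lt_or_gt with hneg | hpos
  · exact ⟨_, hcos, mul_neg_of_pos_of_neg hsin hneg⟩
  · exact ⟨-Real.arccos x, by rw [Real.cos_neg, hcos],
      mul_neg_of_neg_of_pos (by rwa [Real.sin_neg, neg_lt_zero]) hpos⟩

lemma abs_apply_le_of_mem_halfDiff {n : ℕ} {K : Set (Fin n → ℝ)} {i : Fin n} {m w : ℝ}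
    {q : Fin n → ℝ} (hrange : Function.eval i '' K = Icc (m - w) (m + w)) (hq : q ∈ halfDiff K) :
    |q i| ≤ w := by
  obtain ⟨p, hp, p', hp', rfl⟩ := mem_halfDiff.1 hq
  obtain ⟨hlow, hhigh⟩ := hrange.subset (mem_image_of_mem _ hp)
  obtain ⟨hlow', hhigh'⟩ := hrange.subset (mem_image_of_mem _ hp')
  rw [Pi.smul_apply, Pi.sub_apply, smul_eq_mul, abs_le]
  simp only [Function.eval] at *
  constructor <;> linarith

namespace IsMaxHex

variable {K : Set (Fin 2 → ℝ)} {a b a' b' p : Fin 2 → ℝ} {m w : ℝ}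

lemma sub_mul_le_sub_mul (hm : IsMaxHex K a b) (h : IsHexExtremal K) (hp : p ∈ halfDiff K) :
    p 0 * (2 * b 1 - a 1) - p 1 * (2 * b 0 - a 0) ≤
      a 0 * (2 * b 1 - a 1) - a 1 * (2 * b 0 - a 0) := by
  have := hm.cross_le_left h hp
  simp only [cross] at this
  linarith

lemma two_mul_apply_zero_ne (hm : IsMaxHex K a b) (h : IsHexExtremal K) (hw : 0 < w)
    (hrange : Function.eval 0 '' K = Icc (m - w) (m + w)) (ha : |a 0| < w) : 2 * b 0 - a 0 ≠ 0 := by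
  intro hzero
  obtain ⟨e, he, -⟩ := h.exists_isMaxHex hw hrange 0
  have he0 : e 0 = w := by simpa using apply_zero_of_mem_halfChords he
  have hright := hm.sub_mul_le_sub_mul h (halfChords_subset_halfDiff he)
  have hleft := hm.sub_mul_le_sub_mul h (neg_mem_halfDiff (halfChords_subset_halfDiff he))
  have hcross : 0 < a 0 * (2 * b 1 - a 1) := by
    have := hm.cross_pos h
    rw [cross] at this
    linear_combination 2 * this - a 1 * hzero
  simp only [Pi.neg_apply, hzero, he0, mul_zero, sub_zero] at hright hleft
  obtain ⟨ha_gt, ha_lt⟩ := abs_lt.1 ha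
  rcases lt_trichotomy (2 * b 1 - a 1) 0 with hD | hD | hD <;> nlinarith

lemma left_unique (hm : IsMaxHex K a b) (hm' : IsMaxHex K a' b') (h : IsHexExtremal K)
    (ha : a 0 = a' 0) (hpos : 0 < (2 * b 0 - a 0) * (2 * b' 0 - a' 0)) : a = a' := by
  have hle := hm.sub_mul_le_sub_mul h hm'.left_mem
  have hle' := hm'.sub_mul_le_sub_mul h hm.left_mem
  rw [ha] at hpos
  rw [ha, sub_le_sub_iff_left] at hle hle'
  have hone : a 1 = a' 1 := by
    rcases pos_and_pos_or_neg_and_neg_of_mul_pos hpos with ⟨hD, hD'⟩ | ⟨hD, hD'⟩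
    · exact le_antisymm (le_of_mul_le_mul_right hle hD) (le_of_mul_le_mul_right hle' hD')
    · exact le_antisymm ((mul_le_mul_right_of_neg hD').1 hle')
        ((mul_le_mul_right_of_neg hD).1 hle)
  ext i
  fin_cases i
  exacts [ha, hone]

lemma apply_zero_form_of_abs_lt (hm : IsMaxHex K a b) (h : IsHexExtremal K) (hw : 0 < w)
    (hrange : Function.eval 0 '' K = Icc (m - w) (m + w)) (ha : |a 0| < w) :
    4 * (a 0 ^ 2 - a 0 * b 0 + b 0 ^ 2) = 3 * w ^ 2 := by
  have hsq : √3 * √3 = 3 := Real.mul_self_sqrt (by norm_num)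
  obtain ⟨t, hcos, hsin⟩ := exists_cos_eq_of_abs_lt_one
    (show |a 0 / w| < 1 by rwa [abs_div, abs_of_pos hw, div_lt_one hw])
    (hm.two_mul_apply_zero_ne h hw hrange ha)
  obtain ⟨a', ha', b', hb', hm'⟩ := h.exists_isMaxHex hw hrange t
  have ha'0 := apply_zero_of_mem_halfChords ha'
  have hb'0 := apply_zero_of_mem_halfChords hb'
  rw [cos_add_pi_div_three] at hb'0
  have ha_eq : a 0 = w * Real.cos t := by rw [hcos, mul_div_cancel₀ _ hw.ne']
  obtain rfl : a = a' := hm.left_unique hm' h (ha_eq.trans ha'0.symm) <| by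
    have hD : 2 * b' 0 - a' 0 = -(√3 * w * Real.sin t) := by rw [ha'0, hb'0]; ring
    rw [hD]
    have : 0 < √3 * w := by positivity
    nlinarith
  obtain rfl : b = b' := hm.right_unique hm' h
  rw [ha'0, hb'0]
  linear_combination w ^ 2 * Real.sin t ^ 2 * hsq + 3 * w ^ 2 * Real.sin_sq_add_cos_sq t

/-- Of the three diagonals of the hexagon at most two span the full width of `K`. -/
lemma apply_zero_form (hm : IsMaxHex K a b) (h : IsHexExtremal K) (hw : 0 < w)
    (hrange : Function.eval 0 '' K = Icc (m - w) (m + w)) :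
    4 * (a 0 ^ 2 - a 0 * b 0 + b 0 ^ 2) = 3 * w ^ 2 := by
  have hle : ∀ {q}, q ∈ halfDiff K → |q 0| ≤ w := abs_apply_le_of_mem_halfDiff hrange
  rcases (hle hm.left_mem).lt_or_eq with ha | ha
  · exact hm.apply_zero_form_of_abs_lt h hw hrange ha
  rcases (hle hm.right_mem).lt_or_eq with hb | hb
  · have := hm.rotate.apply_zero_form_of_abs_lt h hw hrange hb
    simp only [Pi.sub_apply] at this
    linarith
  have hsub : |(b - a) 0| < w := by
    refine (hle hm.sub_mem).lt_of_ne fun hab => ?_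
    rw [Pi.sub_apply] at hab
    rcases eq_or_eq_neg_of_abs_eq ha with ha | ha <;>
      rcases eq_or_eq_neg_of_abs_eq hb with hb | hb <;>
        rcases eq_or_eq_neg_of_abs_eq hab with hab | hab <;> linarith
  have := hm.rotate.rotate.apply_zero_form_of_abs_lt h hw hrange hsub
  simp only [Pi.sub_apply] at this
  linarith

end IsMaxHex

section Disc

/-- The unit vector at angle `t`. -/
def unitVec (t : ℝ) : Fin 2 → ℝ :=
  ![Real.cos t, Real.sin t]

lemma unitVec_dotProduct_self (t : ℝ) : unitVec t ⬝ᵥ unitVec t = 1 := by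
  simp [unitVec, dotProduct, ← sq]

lemma unitVec_add_pi (t : ℝ) : unitVec (t + Real.pi) = -unitVec t := by
  simp [unitVec]

lemma exists_eq_smul_unitVec (q : Fin 2 → ℝ) : ∃ r t : ℝ, 0 ≤ r ∧ q = r • unitVec t := by
  refine ⟨‖(⟨q 0, q 1⟩ : ℂ)‖, Complex.arg ⟨q 0, q 1⟩, norm_nonneg _, ?_⟩
  ext i
  fin_cases i
  · exact (Complex.norm_mul_cos_arg ⟨q 0, q 1⟩).symm
  · exact (Complex.norm_mul_sin_arg ⟨q 0, q 1⟩).symm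

/-- By the parallelogram law: both diagonals of the parallelogram spanned by the two chords have
length at most `2`. -/
lemma eq_of_smul_sub_eq {n : ℕ} {K : Set (Fin n → ℝ)} (hdisc : ∀ q ∈ halfDiff K, q ⬝ᵥ q ≤ 1)
    {e p p' q q' : Fin n → ℝ} (he : e ⬝ᵥ e = 1) (hp : p ∈ K) (hp' : p' ∈ K) (hq : q ∈ K)
    (hq' : q' ∈ K) (hpp' : (2⁻¹ : ℝ) • (p - p') = e) (hqq' : (2⁻¹ : ℝ) • (q - q') = e) :
    p = q := by
  have hpq' : (2⁻¹ : ℝ) • (p - q') = e + (2⁻¹ : ℝ) • (p - q) := by rw [← hqq']; module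
  have hqp' : (2⁻¹ : ℝ) • (q - p') = e - (2⁻¹ : ℝ) • (p - q) := by rw [← hpp']; module
  have hplus := hdisc _ (smul_sub_mem_halfDiff hp hq')
  have hminus := hdisc _ (smul_sub_mem_halfDiff hq hp')
  rw [hpq'] at hplus
  rw [hqp'] at hminus
  simp only [dotProduct_add, add_dotProduct, dotProduct_sub, sub_dotProduct, dotProduct_smul,
    smul_dotProduct, smul_eq_mul, he] at hplus hminus
  have hzero : (p - q) ⬝ᵥ (p - q) = 0 := by
    refine le_antisymm ?_ (dotProduct_self_star_nonneg (p - q))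
    simp only [dotProduct_sub, sub_dotProduct]
    linarith
  exact sub_eq_zero.1 (dotProduct_self_eq_zero.1 hzero)

lemma eq_disc_of_circle_subset {K : Set (Fin 2 → ℝ)} (hK : Convex ℝ K)
    (hdisc : ∀ q ∈ halfDiff K, q ⬝ᵥ q ≤ 1) {z : Fin 2 → ℝ} (hz : ∀ t, z + unitVec t ∈ K) :
    K = {p | (p - z) ⬝ᵥ (p - z) ≤ 1} := by
  have hantipode : ∀ t, z - unitVec t ∈ K := fun t => by
    rw [sub_eq_add_neg, ← unitVec_add_pi]
    exact hz _
  have hnorm : ∀ s t : ℝ, (s • unitVec t) ⬝ᵥ (s • unitVec t) = s * s := fun s t => by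
    rw [dotProduct_smul, smul_dotProduct, unitVec_dotProduct_self, smul_eq_mul, smul_eq_mul,
      mul_one]
  ext p
  obtain ⟨r, t, hr, hpr⟩ := exists_eq_smul_unitVec (p - z)
  rw [mem_ofPred_eq, hpr, hnorm]
  constructor
  · intro hp
    have hchord : (2⁻¹ : ℝ) • (p - (z - unitVec t)) = ((r + 1) / 2) • unitVec t := by
      rw [sub_sub_eq_add_sub, add_sub_right_comm, hpr]
      module
    have hle := hdisc _ (smul_sub_mem_halfDiff hp (hantipode t))
    rw [hchord, hnorm] at hle
    nlinarith
  · intro hle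
    have hr1 : r ≤ 1 := by nlinarith
    have hp : p = ((1 + r) / 2) • (z + unitVec t) + ((1 - r) / 2) • (z - unitVec t) := by
      rw [eq_add_of_sub_eq hpr]
      module
    rw [hp]
    exact hK (hz t) (hantipode t) (by linarith) (by linarith) (by ring)

end Disc

section RegularHexagon

variable {K : Set (Fin 2 → ℝ)} {a b : Fin 2 → ℝ} {m θ : ℝ}

lemma IsMaxHex.dotProduct_self_le_one (hm : IsMaxHex K (unitVec θ) (unitVec (θ + Real.pi / 3)))
    (h : IsHexExtremal K) {q : Fin 2 → ℝ} (hq : q ∈ halfDiff K) : q ⬝ᵥ q ≤ 1 := by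
  rcases eq_or_ne q 0 with rfl | hq0
  · simp
  have hsq : √3 * √3 = 3 := Real.mul_self_sqrt (by norm_num)
  -- `A` turns the direction of `q` into the first axis, in which `apply_zero_form` gives the width
  set A : Matrix (Fin 2) (Fin 2) ℝ := !![q 0, q 1; -q 1, q 0] with hA
  have hpos : 0 < q ⬝ᵥ q := dotProduct_self_star_pos_iff.2 hq0
  have hdet : A.det = q ⬝ᵥ q := by simp [hA, det_fin_two, dotProduct]
  have hApos : 0 < A.det := hdet ▸ hpos
  have hAapply : ∀ p : Fin 2 → ℝ, (A *ᵥ p) 0 = q ⬝ᵥ p := fun p => by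
    simp [hA, mulVec, dotProduct]
  have h' := h.image hApos
  obtain ⟨m, w, hw, hrange⟩ :=
    exists_eval_image_eq_Icc h'.isCompact h'.convex h'.interior_nonempty 0
  have hform : q ⬝ᵥ q = w ^ 2 := by
    have := (hm.image hApos).apply_zero_form h' hw hrange
    rw [hAapply, hAapply] at this
    simp only [unitVec, cos_add_pi_div_three, sin_add_pi_div_three, dotProduct,
      Fin.sum_univ_two, cons_val_zero, cons_val_one] at this ⊢
    linear_combination this / 3 - (q 1 * Real.cos θ - q 0 * Real.sin θ) ^ 2 / 3 * hsq -
      (q 0 * q 0 + q 1 * q 1) * Real.sin_sq_add_cos_sq θ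
  have hwidth : q ⬝ᵥ q ≤ w := by
    rw [← hAapply]
    exact (le_abs_self _).trans (abs_apply_le_of_mem_halfDiff hrange
      (halfDiff_image A.mulVecLin K ▸ mem_image_of_mem _ hq))
  nlinarith

lemma apply_zero_eq_of_dotProduct_self_le_one (ha : a ⬝ᵥ a ≤ 1) (hb : b ⬝ᵥ b ≤ 1)
    (hab : (b - a) ⬝ᵥ (b - a) ≤ 1) (hcross : cross a b = √3 / 2) :
    b 0 = a 0 / 2 - √3 / 2 * a 1 := by
  have hsq : √3 * √3 = 3 := Real.mul_self_sqrt (by norm_num)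
  simp only [dotProduct, Fin.sum_univ_two, Pi.sub_apply] at ha hb hab
  rw [cross] at hcross
  -- the squared distance between `b` and the rotation of `a` by `π / 3`
  have hdist : (b 0 - (a 0 / 2 - √3 / 2 * a 1)) ^ 2 +
      (b 1 - (a 1 / 2 + √3 / 2 * a 0)) ^ 2 ≤ 0 := by
    linear_combination (ha + hb + hab) / 2 - √3 * hcross + (a 0 ^ 2 + a 1 ^ 2 - 2) / 4 * hsq
  refine sub_eq_zero.1 (pow_eq_zero_iff two_ne_zero |>.1 (le_antisymm ?_ (sq_nonneg _)))
  linarith [sq_nonneg (b 1 - (a 1 / 2 + √3 / 2 * a 0))]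

lemma cross_unitVec_add_pi_div_three (θ : ℝ) :
    cross (unitVec θ) (unitVec (θ + Real.pi / 3)) = √3 / 2 := by
  simp only [cross, unitVec, cons_val_zero, cons_val_one, cos_add_pi_div_three,
    sin_add_pi_div_three]
  linear_combination √3 / 2 * Real.sin_sq_add_cos_sq θ

namespace IsMaxHex

lemma unitVec_mem_halfChords (hm : IsMaxHex K (unitVec θ) (unitVec (θ + Real.pi / 3)))
    (h : IsHexExtremal K) (hrange : Function.eval 0 '' K = Icc (m - 1) (m + 1)) (t : ℝ) :
    unitVec t ∈ halfChords K m 1 t := by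
  have hdisc : ∀ q ∈ halfDiff K, q ⬝ᵥ q ≤ 1 := fun q hq => hm.dotProduct_self_le_one h hq
  obtain ⟨a, ha, b, hb, hab⟩ := h.exists_isMaxHex one_pos hrange t
  have hcross := (hab.cross_eq_cross hm).trans (cross_unitVec_add_pi_div_three θ)
  have hrot := apply_zero_eq_of_dotProduct_self_le_one (hdisc a hab.left_mem)
    (hdisc b hab.right_mem) (hdisc _ hab.sub_mem) hcross
  have ha0 : a 0 = Real.cos t := by simpa using apply_zero_of_mem_halfChords ha
  have hb0 : b 0 = Real.cos (t + Real.pi / 3) := by simpa using apply_zero_of_mem_halfChords hb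
  rw [ha0, hb0, cos_add_pi_div_three, sub_right_inj] at hrot
  have ha1 : a 1 = Real.sin t := mul_left_cancel₀ (by positivity) hrot.symm
  obtain rfl : unitVec t = a := by
    ext i
    fin_cases i
    exacts [ha0.symm, ha1.symm]
  exact ha

lemma exists_forall_unitVec_mem_halfChords
    (hm : IsMaxHex K (unitVec θ) (unitVec (θ + Real.pi / 3))) (h : IsHexExtremal K) :
    ∃ m, ∀ t, unitVec t ∈ halfChords K m 1 t := by
  obtain ⟨m, w, hw, hrange⟩ :=
    exists_eval_image_eq_Icc h.isCompact h.convex h.interior_nonempty 0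
  have hw_eq : w = 1 := by
    have hsq : √3 * √3 = 3 := Real.mul_self_sqrt (by norm_num)
    have hform := hm.apply_zero_form h hw hrange
    simp only [unitVec, cos_add_pi_div_three, cons_val_zero] at hform
    refine (pow_eq_one_iff_of_nonneg hw.le two_ne_zero).1 ?_
    linear_combination -hform / 3 + Real.sin θ ^ 2 / 3 * hsq + Real.sin_sq_add_cos_sq θ
  exact ⟨m, hm.unitVec_mem_halfChords h (hw_eq ▸ hrange)⟩

lemma exists_circle_subset (hm : IsMaxHex K (unitVec θ) (unitVec (θ + Real.pi / 3)))
    (h : IsHexExtremal K) : ∃ z, ∀ t, z + unitVec t ∈ K := by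
  set R : Matrix (Fin 2) (Fin 2) ℝ := !![0, 1; -1, 0] with hR
  have hRdet : R.det = 1 := by simp [hR, det_fin_two]
  have hRunit : ∀ t, R *ᵥ unitVec t = unitVec (t - Real.pi / 2) := fun t => by
    ext i
    fin_cases i <;>
      simp [hR, unitVec, mulVec, dotProduct, Real.cos_sub_pi_div_two, Real.sin_sub_pi_div_two]
  have hRpos : 0 < R.det := hRdet ▸ one_pos
  have hmR := hm.image hRpos
  rw [hRunit, hRunit, add_sub_right_comm] at hmR
  obtain ⟨m, hfst⟩ := hm.exists_forall_unitVec_mem_halfChords h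
  obtain ⟨n, hsnd⟩ := hmR.exists_forall_unitVec_mem_halfChords (h.image hRpos)
  refine ⟨![m, n], fun t => ?_⟩
  obtain ⟨p, hp, p', hp', hp0, -, hpp'⟩ := hfst t
  obtain ⟨_, ⟨q, hq, rfl⟩, _, ⟨q', hq', rfl⟩, hq1, -, hqq'⟩ := hsnd (t - Real.pi / 2)
  rw [← hRunit, ← map_sub, ← map_smul, mulVecLin_apply] at hqq'
  have hRinj : Function.Injective R.mulVec := mulVec_injective_iff_isUnit.2 <|
    (isUnit_iff_isUnit_det R).2 hRpos.ne'.isUnit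
  obtain rfl : p = q := eq_of_smul_sub_eq (fun q hq => hm.dotProduct_self_le_one h hq)
    (unitVec_dotProduct_self t) hp hp' hq hq' hpp' (hRinj hqq')
  have hp1 : p 1 = n + Real.sin t := by
    simpa [hR, mulVec, dotProduct, Real.cos_sub_pi_div_two] using hq1
  convert hp using 1
  ext i
  fin_cases i
  · simpa [unitVec] using hp0.symm
  · simpa [unitVec] using hp1.symm

end IsMaxHex

end RegularHexagon

lemma isEllipse_of_image_eq_disc {K : Set (Fin 2 → ℝ)} {A : Matrix (Fin 2) (Fin 2) ℝ}
    {z : Fin 2 → ℝ} (hA : A.det ≠ 0) (hK : A.mulVecLin '' K = {p | (p - z) ⬝ᵥ (p - z) ≤ 1}) :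
    IsEllipse K := by
  have hunit : IsUnit A.det := hA.isUnit
  have hinv : ∀ x, A⁻¹ *ᵥ (A *ᵥ x) = x := fun x => by
    rw [mulVec_mulVec, nonsing_inv_mul A hunit, one_mulVec]
  refine ⟨A⁻¹, by simpa [det_nonsing_inv] using hA, A⁻¹ *ᵥ z, ?_⟩
  ext p
  constructor
  · intro hp
    refine ⟨A *ᵥ p - z, hK.subset (mem_image_of_mem _ hp), ?_⟩
    simp only [← mulVec_add, sub_add_cancel, hinv]
  · rintro ⟨x, hx, rfl⟩
    obtain ⟨p, hp, hpx⟩ : x + z ∈ A.mulVecLin '' K := by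
      rwa [hK, mem_ofPred_eq, add_sub_cancel_right]
    rw [mulVecLin_apply] at hpx
    simp only [← mulVec_add, ← hpx, hinv]
    exact hp

lemma IsMaxHex.isEllipse {K : Set (Fin 2 → ℝ)} {a b : Fin 2 → ℝ} (hm : IsMaxHex K a b)
    (h : IsHexExtremal K) : IsEllipse K := by
  have hcross := hm.cross_pos h
  set C : Matrix (Fin 2) (Fin 2) ℝ :=
    !![a 0, (2 * b 0 - a 0) / √3; a 1, (2 * b 1 - a 1) / √3] with hC
  have hCdet : C.det = 2 / √3 * cross a b := by
    simp only [hC, det_fin_two_of, cross]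
    ring
  have hCpos : 0 < C.det := hCdet ▸ by positivity
  have hCa : C *ᵥ unitVec 0 = a := by
    ext i
    fin_cases i <;> simp [hC, unitVec]
  have hCb : C *ᵥ unitVec (0 + Real.pi / 3) = b := by
    ext i
    fin_cases i <;> simp [hC, unitVec] <;> field_simp <;> ring
  have hCinv : ∀ x, C⁻¹ *ᵥ (C *ᵥ x) = x := fun x => by
    rw [mulVec_mulVec, nonsing_inv_mul C hCpos.ne'.isUnit, one_mulVec]
  have hinvpos : 0 < C⁻¹.det := by
    rw [det_nonsing_inv, Ring.inverse_eq_inv']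
    positivity
  have h' := h.image hinvpos
  have hm' := hm.image hinvpos
  rw [← hCa, ← hCb, hCinv, hCinv] at hm'
  obtain ⟨z, hz⟩ := hm'.exists_circle_subset h'
  exact isEllipse_of_image_eq_disc hinvpos.ne' (eq_disc_of_circle_subset h'.convex
    (fun q hq => hm'.dotProduct_self_le_one h' hq) hz)

/-- If a convex body `K ⊆ ℝ²` satisfies `d_{2,1}(K) = π√3/8`, then `K` is an ellipse. -/
theorem eq_case_d21 (K : Set (Fin 2 → ℝ))
    (hKc : IsCompact K) (hKconv : Convex ℝ K) (hKint : (interior K).Nonempty)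
    (heq : dTrans K = Real.pi * Real.sqrt 3 / 8) :
    IsEllipse K := by
  have h : IsHexExtremal K := isHexExtremal_of_le_dTrans hKc hKconv hKint heq.ge
  obtain ⟨m, w, hw, hrange⟩ := exists_eval_image_eq_Icc hKc hKconv hKint 0
  obtain ⟨a, -, b, -, hab⟩ := h.exists_isMaxHex hw hrange 0
  exact hab.isEllipse h
end
end
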